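/- arXiv:2512.18377 — 2 statements merged into one kernel-verified Lean document; each statement's English description precedes it below -/
import Mathlib

section
/- Let X be a Banach space, T > 0, p ≥ 6 an integer, F ∈ C^p([0,T] × X, X), and suppose the initial value problem u'(t) = F(t, u(t)) on [0,T], u(0) = u₀, has a unique solution u ∈ C^{p+1}([0,T], X). For a positive integer N let k = T/N, t_n = nk, and let {u^{4,n}}_{n=0}^{N} be the sequence produced by the classical fourth-order Runge–Kutta method: u^{4,0} = u₀ and u^{4,n+1} = u^{4,n} + (k/6)(K₁ + 2K₂ + 2K₃ + K₄), where K₁ = F(t_n, u^{4,n}), K₂ = F(t_n + k/2, u^{4,n} + (k/2)K₁), K₃ = F(t_n + k/2, u^{4,n} + (k/2)K₂), K₄ = F(t_n + k, u^{4,n} + kK₃). Then for every integer m with 0 ≤ m ≤ p − 4 there exists a constant C, independent of k (depending only on m, T, F and the derivatives of u), such that ‖D₊^m(u^{4,n} − u(t_n))‖ ≤ C k^4 for all n = 0, 1, …, N − m, where D₊^m applied to the sequence e^n = u^{4,n} − u(t_n) is D₊^m e^n = k^{−m} Σ_{i=0}^{m} (−1)^i binom(m,i) e^{n+m−i}. 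-/
open Finset

variable {X : Type*} [NormedAddCommGroup X] [NormedSpace ℝ X] [CompleteSpace X]

/-- One step of the classical fourth-order Runge–Kutta method for `u' = F(t,u)`
from time `t` with step `h`. -/
noncomputable def rk4Step (F : ℝ → X → X) (t h : ℝ) (x : X) : X :=
  let K1 := F t x
  let K2 := F (t + h / 2) (x + (h / 2) • K1)
  let K3 := F (t + h / 2) (x + (h / 2) • K2)
  let K4 := F (t + h) (x + h • K3)
  x + (h / 6) • (K1 + (2 : ℝ) • K2 + (2 : ℝ) • K3 + K4)

/-!
In the coordinates `e = x - u t` the equation has the vector field `G(t, e) = F(t, u t + e)`. Let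
`E₂, E₃, E₄` be the errors of the stage values of a Runge–Kutta step. If `e = O(k⁴)`, then
`E₂ = O(k²)`, and quadrature rules for `u` give the cancellations `E₂ + E₃ = O(k³)` and
`2 (E₂ + E₃) + E₄ = O(k⁴)`. Linearizing `G` in `e`, these and Simpson's rule show that the increment
of the error in one step is `O(k⁵)`. All these estimates persist under `m` applications of `D₊`, as
long as `D₊^l e = O(k⁴)` for `l ≤ m`.

Stability of the method gives `e = O(k⁴)` by a discrete Grönwall inequality. Since `k D₊ e` is the
increment of the error, the bound for `D₊^l e`, `l ≤ m`, then implies the one for `D₊^(m + 1) e`.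
-/

open Filter
open scoped fwdDiff Topology

theorem fwdDiff_iter_congr {M : Type*} [AddCommGroup M] {y z : ℕ → M} {l n : ℕ}
    (h : ∀ j ≤ n + l, y j = z j) :
    Δ_[1] ^[l] y n = Δ_[1] ^[l] z n := by
  simp only [fwdDiff_iter_eq_sum_shift]
  refine Finset.sum_congr rfl fun j hj => ?_
  rw [h (n + j • 1) (by simpa using Finset.mem_range_succ_iff.mp hj)]

theorem fwdDiff_iter_map {M M' A : Type*} [AddCommGroup M] [AddCommGroup M'] [FunLike A M M']
    [AddMonoidHomClass A M M'] (φ : A) (y : ℕ → M) (l n : ℕ) :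
    Δ_[1] ^[l] (fun j => φ (y j)) n = φ (Δ_[1] ^[l] y n) := by
  simp only [fwdDiff_iter_eq_sum_shift, map_sum, map_zsmul]

theorem hasDerivWithinAt_fwdDiff_iter {E : Type*} [NormedAddCommGroup E] [NormedSpace ℝ E]
    {Z : ℝ → ℕ → E} {Z' : ℕ → E} {S : Set ℝ} {s : ℝ} {l n : ℕ}
    (h : ∀ j ≤ n + l, HasDerivWithinAt (fun s => Z s j) (Z' j) S s) :
    HasDerivWithinAt (fun s => Δ_[1] ^[l] (Z s) n) (Δ_[1] ^[l] Z' n) S s := by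
  simp only [fwdDiff_iter_eq_sum_shift]
  refine HasDerivWithinAt.fun_sum fun j hj => ?_
  have hjl : n + j • 1 ≤ n + l := by simpa using Finset.mem_range_succ_iff.mp hj
  simpa only [← Int.cast_smul_eq_zsmul ℝ] using (h _ hjl).fun_const_smul _

theorem sum_choose_smul_eq_fwdDiff_iter {M : Type*} [AddCommGroup M] [Module ℝ M] (y : ℕ → M)
    (m n : ℕ) :
    ∑ i ∈ range (m + 1), ((-1 : ℝ) ^ i * (m.choose i : ℝ)) • y (n + m - i) =
      Δ_[1] ^[m] y n := by
  rw [fwdDiff_iter_eq_sum_shift, ← Finset.sum_range_reflect]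
  refine Finset.sum_congr rfl fun j hj => ?_
  have hjm : j ≤ m := Finset.mem_range_succ_iff.mp hj
  rw [show m + 1 - 1 - j = m - j by omega, show n + m - (m - j) = n + j • 1 by simp; omega,
    Nat.choose_symm hjm, ← Int.cast_smul_eq_zsmul ℝ]
  push_cast
  rfl

/-- A family of uniform grids indexed by `ι`: the `i`-th grid has the nodes `n * step i` for
`n < card i`, and the steps of the family are bounded. Estimates "with a constant independent of
the step" are estimates that are uniform over such a family. -/
structure GridFamily (ι : Type*) where
  step : ι → ℝ
  card : ι → ℕ
  step_pos : ∀ i, 0 < step i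
  bddAbove_step : BddAbove (Set.range step)

namespace GridFamily

variable {ι κ E E₁ E₂ : Type*} [NormedAddCommGroup E] [NormedAddCommGroup E₁]
  [NormedAddCommGroup E₂]

/-- The family of grids `𝒢 (f j)`. -/
@[simps]
def comap (f : κ → ι) (𝒢 : GridFamily ι) : GridFamily κ where
  step j := 𝒢.step (f j)
  card j := 𝒢.card (f j)
  step_pos j := 𝒢.step_pos (f j)
  bddAbove_step := 𝒢.bddAbove_step.mono (Set.range_comp_subset_range f 𝒢.step)

/-- The family obtained by removing the last node of every grid: the domain of the forward
difference of a family of sequences. -/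
def dropLast (𝒢 : GridFamily ι) : GridFamily ι where
  __ := 𝒢
  card i := 𝒢.card i - 1

/-- The family of sequences `y i`, given on the nodes of the grids, satisfies `D₊^l y = O(k^r)` for
all `l ≤ m`, uniformly over the family, where `k` is the step. Since `D₊ = k⁻¹ Δ`, this is expressed
without division as `Δ^l y = O(k^(r + l))`. -/
def IsBigO (𝒢 : GridFamily ι) (r m : ℕ) (y : ι → ℕ → E) : Prop :=
  ∃ C, ∀ i, ∀ l ≤ m, ∀ n, n + l < 𝒢.card i → ‖Δ_[1] ^[l] (y i) n‖ ≤ C * 𝒢.step i ^ (r + l)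

variable {𝒢 : GridFamily ι} {r s m : ℕ} {y z : ι → ℕ → E}

namespace IsBigO

theorem exists_nonneg (h : 𝒢.IsBigO r m y) : ∃ C, 0 ≤ C ∧ ∀ i, ∀ l ≤ m, ∀ n, n + l < 𝒢.card i →
    ‖Δ_[1] ^[l] (y i) n‖ ≤ C * 𝒢.step i ^ (r + l) := by
  obtain ⟨C, hC⟩ := h
  refine ⟨max C 0, le_max_right _ _, fun i l hl n hn => (hC i l hl n hn).trans ?_⟩
  have := 𝒢.step_pos i
  gcongr
  exact le_max_left _ _

theorem of_le {m' : ℕ} (h : 𝒢.IsBigO r m y) (hm : m' ≤ m) : 𝒢.IsBigO r m' y :=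
  h.imp fun _ hC i l hl => hC i l (hl.trans hm)

protected theorem comap (h : 𝒢.IsBigO r m y) (f : κ → ι) :
    (𝒢.comap f).IsBigO r m fun j => y (f j) :=
  h.imp fun _ hC j => hC (f j)

protected theorem dropLast (h : 𝒢.IsBigO r m y) : 𝒢.dropLast.IsBigO r m y :=
  h.imp fun _ hC i l hl n hn => hC i l hl n (Nat.lt_of_lt_of_le hn (Nat.sub_le _ 1))

theorem congr (h : 𝒢.IsBigO r m y) (hyz : ∀ i, ∀ n < 𝒢.card i, z i n = y i n) :
    𝒢.IsBigO r m z := by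
  refine h.imp fun C hC i l hl n hn => ?_
  rw [fwdDiff_iter_congr fun j hj => hyz i j (hj.trans_lt hn)]
  exact hC i l hl n hn

theorem shift (h : 𝒢.IsBigO r m y) : 𝒢.dropLast.IsBigO r m fun i n => y i (n + 1) := by
  refine h.imp fun C hC i l hl n hn => ?_
  rw [fwdDiff_iter_comp_add]
  exact hC i l hl (n + 1) (by have : n + l < 𝒢.card i - 1 := hn; omega)

theorem weaken (h : 𝒢.IsBigO s m y) (hrs : r ≤ s) : 𝒢.IsBigO r m y := by
  obtain ⟨C, hC₀, hC⟩ := h.exists_nonneg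
  obtain ⟨K, hK⟩ := 𝒢.bddAbove_step
  refine ⟨C * K ^ (s - r), fun i l hl n hn => (hC i l hl n hn).trans ?_⟩
  have hpos := 𝒢.step_pos i
  have hle : 𝒢.step i ≤ K := hK ⟨i, rfl⟩
  calc C * 𝒢.step i ^ (s + l) = C * 𝒢.step i ^ (s - r) * 𝒢.step i ^ (r + l) := by
        rw [mul_assoc, ← pow_add]; congr 2; omega
    _ ≤ C * K ^ (s - r) * 𝒢.step i ^ (r + l) := by gcongr

theorem add (hy : 𝒢.IsBigO r m y) (hz : 𝒢.IsBigO r m z) :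
    𝒢.IsBigO r m fun i n => y i n + z i n := by
  obtain ⟨C, hC⟩ := hy
  obtain ⟨C', hC'⟩ := hz
  refine ⟨C + C', fun i l hl n hn => ?_⟩
  change ‖Δ_[1] ^[l] (y i + z i) n‖ ≤ _
  rw [fwdDiff_iter_add, add_mul]
  exact norm_add_le_of_le (hC i l hl n hn) (hC' i l hl n hn)

end IsBigO

theorem isBigO_zero_iff :
    𝒢.IsBigO r 0 y ↔ ∃ C, ∀ i, ∀ n < 𝒢.card i, ‖y i n‖ ≤ C * 𝒢.step i ^ r := by
  simp only [IsBigO, Nat.le_zero, forall_eq, add_zero, Function.iterate_zero, id_eq]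

theorem isBigO_succ_iff :
    𝒢.IsBigO r (m + 1) y ↔
      𝒢.IsBigO r 0 y ∧ 𝒢.dropLast.IsBigO (r + 1) m fun i => Δ_[1] (y i) := by
  constructor
  · refine fun h => ⟨h.of_le (Nat.zero_le _), h.imp fun C hC i l hl n hn => ?_⟩
    rw [← Function.iterate_succ_apply, add_assoc, add_comm 1 l]
    exact hC i (l + 1) (by omega) n (by have : n + l < 𝒢.card i - 1 := hn; omega)
  · rintro ⟨h₀, h₁⟩
    obtain ⟨C₀, hC₀⟩ := h₀
    obtain ⟨C₁, hC₁⟩ := h₁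
    refine ⟨max C₀ C₁, fun i l hl n hn => ?_⟩
    have hpos := 𝒢.step_pos i
    rcases l with _ | l
    · refine (hC₀ i 0 le_rfl n hn).trans ?_
      gcongr
      exact le_max_left _ _
    · rw [Function.iterate_succ_apply]
      refine (hC₁ i l (by omega) n (show n + l < 𝒢.card i - 1 by omega)).trans ?_
      rw [add_assoc, add_comm 1 l]
      change C₁ * 𝒢.step i ^ (r + (l + 1)) ≤ _
      gcongr
      exact le_max_right _ _

theorem isBigO_const {c : ι → E} (h : ∃ C, ∀ i, ‖c i‖ ≤ C * 𝒢.step i ^ r) :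
    𝒢.IsBigO r m fun i _ => c i := by
  induction m generalizing r 𝒢 c with
  | zero => exact isBigO_zero_iff.mpr (h.imp fun C hC i n _ => hC i)
  | succ m ih =>
    refine isBigO_succ_iff.mpr ⟨isBigO_zero_iff.mpr (h.imp fun C hC i n _ => hC i), ?_⟩
    simp only [fwdDiff_const]
    exact ih ⟨0, by simp⟩

theorem IsBigO.sum {J : Type*} (S : Finset J) {w : J → ι → ℕ → E}
    (hw : ∀ j ∈ S, 𝒢.IsBigO r m (w j)) :
    𝒢.IsBigO r m fun i n => ∑ j ∈ S, w j i n := by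
  classical
  induction S using Finset.induction_on with
  | empty => simpa using isBigO_const (c := fun _ => (0 : E)) ⟨0, by simp⟩
  | insert j S hj ih =>
    simp only [Finset.sum_insert hj]
    exact (hw j (mem_insert_self j S)).add (ih fun j' hj' => hw j' (mem_insert_of_mem hj'))

theorem IsBigO.of_finite_compl {S : Set ι} (hS : Sᶜ.Finite)
    (h : (𝒢.comap ((↑) : S → ι)).IsBigO r m fun i => y i) : 𝒢.IsBigO r m y := by
  classical
  obtain ⟨C, hC⟩ := h
  let ratio (p : (ι × ℕ) × ℕ) : ℝ := ‖Δ_[1] ^[p.1.2] (y p.1.1) p.2‖ / 𝒢.step p.1.1 ^ (r + p.1.2)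
  let exceptional := hS.toFinset.biUnion fun i =>
    (range (m + 1)).biUnion fun l => (range (𝒢.card i)).image fun n => ((i, l), n)
  obtain ⟨C', hC'⟩ := (exceptional.image ratio).exists_le
  refine ⟨max C C', fun i l hl n hn => ?_⟩
  have hpos := 𝒢.step_pos i
  by_cases hi : i ∈ S
  · refine (hC ⟨i, hi⟩ l hl n hn).trans ?_
    change C * 𝒢.step i ^ (r + l) ≤ _
    gcongr
    exact le_max_left _ _
  · have hmem : ((i, l), n) ∈ exceptional := by
      simp only [exceptional, mem_biUnion, mem_image, mem_range, Set.Finite.mem_toFinset]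
      exact ⟨i, hi, l, by omega, n, by omega, rfl⟩
    rw [← div_le_iff₀ (by positivity)]
    exact (hC' _ (mem_image_of_mem ratio hmem)).trans (le_max_right _ _)

variable [NormedSpace ℝ E] [NormedSpace ℝ E₁] [NormedSpace ℝ E₂]

theorem IsBigO.bilin (B : E →L[ℝ] E₁ →L[ℝ] E₂) {b : ι → ℕ → E₁} (hy : 𝒢.IsBigO r m y)
    (hb : 𝒢.IsBigO s m b) : 𝒢.IsBigO (r + s) m fun i n => B (y i n) (b i n) := by
  have bound {r s : ℕ} {𝒢 : GridFamily ι} {y : ι → ℕ → E} {b : ι → ℕ → E₁}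
      (hy : 𝒢.IsBigO r 0 y) (hb : 𝒢.IsBigO s 0 b) :
      𝒢.IsBigO (r + s) 0 fun i n => B (y i n) (b i n) := by
    obtain ⟨C, hC₀, hC⟩ := hy.exists_nonneg
    obtain ⟨C', hC'⟩ := isBigO_zero_iff.mp hb
    refine isBigO_zero_iff.mpr ⟨‖B‖ * C * C', fun i n hn => ?_⟩
    have hpos := 𝒢.step_pos i
    calc ‖B (y i n) (b i n)‖ ≤ ‖B‖ * ‖y i n‖ * ‖b i n‖ := B.le_opNorm₂ _ _
      _ ≤ ‖B‖ * (C * 𝒢.step i ^ r) * (C' * 𝒢.step i ^ s) := by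
        gcongr
        · exact hC i 0 le_rfl n hn
        · exact hC' i n hn
      _ = ‖B‖ * C * C' * 𝒢.step i ^ (r + s) := by ring
  induction m generalizing r s 𝒢 y b with
  | zero => exact bound hy hb
  | succ m ih =>
    obtain ⟨hy₀, hy₁⟩ := isBigO_succ_iff.mp hy
    obtain ⟨hb₀, hb₁⟩ := isBigO_succ_iff.mp hb
    have leibniz (i : ι) (n : ℕ) : Δ_[1] (fun n => B (y i n) (b i n)) n =
        B (Δ_[1] (y i) n) (b i n) + B (y i (n + 1)) (Δ_[1] (b i) n) := by
      simp only [fwdDiff, map_sub, sub_apply]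
      abel
    refine isBigO_succ_iff.mpr ⟨bound hy₀ hb₀, IsBigO.congr ?_ fun i n _ => leibniz i n⟩
    have left := ih hy₁ (hb.of_le m.le_succ).dropLast
    have right := ih (hy.of_le m.le_succ).shift hb₁
    rw [add_right_comm] at left
    exact left.add right

namespace IsBigO

theorem map (h : 𝒢.IsBigO r m y) (A : E →L[ℝ] E₁) : 𝒢.IsBigO r m fun i n => A (y i n) := by
  obtain ⟨C, hC⟩ := h
  refine ⟨‖A‖ * C, fun i l hl n hn => ?_⟩
  rw [fwdDiff_iter_map, mul_assoc]
  exact A.le_opNorm_of_le (hC i l hl n hn)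

theorem clm_apply {A : ι → ℕ → E →L[ℝ] E₁} (hA : 𝒢.IsBigO r m A) (hy : 𝒢.IsBigO s m y) :
    𝒢.IsBigO (r + s) m fun i n => A i n (y i n) :=
  hA.bilin (ContinuousLinearMap.id ℝ (E →L[ℝ] E₁)) hy

theorem smul_of_le {c : ι → ℝ} (hy : 𝒢.IsBigO r m y) (hc : ∃ C, ∀ i, |c i| ≤ C * 𝒢.step i ^ s) :
    𝒢.IsBigO (s + r) m fun i n => c i • y i n :=
  (isBigO_const (E := ℝ) hc).bilin (ContinuousLinearMap.lsmul ℝ ℝ) hy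

theorem const_smul (hy : 𝒢.IsBigO r m y) (c : ℝ) : 𝒢.IsBigO r m fun i n => c • y i n :=
  hy.map (c • ContinuousLinearMap.id ℝ E)

theorem step_smul (hy : 𝒢.IsBigO r m y) (c : ℝ) :
    𝒢.IsBigO (r + 1) m fun i n => (c * 𝒢.step i) • y i n := by
  rw [add_comm]
  refine hy.smul_of_le ⟨|c|, fun i => ?_⟩
  rw [abs_mul, abs_of_pos (𝒢.step_pos i), pow_one]

theorem sub (hy : 𝒢.IsBigO r m y) (hz : 𝒢.IsBigO r m z) :
    𝒢.IsBigO r m fun i n => y i n - z i n :=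
  (hy.add (hz.const_smul (-1))).congr fun i n _ => by rw [neg_one_smul, sub_eq_add_neg]

theorem prodMk {b : ι → ℕ → E₁} (hy : 𝒢.IsBigO r m y) (hb : 𝒢.IsBigO r m b) :
    𝒢.IsBigO r m fun i n => (y i n, b i n) :=
  ((hy.map (ContinuousLinearMap.inl ℝ E E₁)).add (hb.map (ContinuousLinearMap.inr ℝ E E₁))).congr
    fun i n _ => by simp

-- Indexing grids by `ι × [0, 1]` makes a bound on `Z'` uniform in the parameter `θ` as well.
theorem sub_of_hasDerivWithinAt {Z Z' : ι → ℝ → ℕ → E}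
    (hZ : ∀ i, ∀ n < 𝒢.card i, ∀ θ ∈ Set.Icc (0 : ℝ) 1,
      HasDerivWithinAt (fun θ => Z i θ n) (Z' i θ n) (Set.Icc 0 1) θ)
    (h : (𝒢.comap (Prod.fst : ι × Set.Icc (0 : ℝ) 1 → ι)).IsBigO r m fun p => Z' p.1 p.2) :
    𝒢.IsBigO r m fun i n => Z i 1 n - Z i 0 n := by
  obtain ⟨C, hC⟩ := h
  refine ⟨C, fun i l hl n hn => ?_⟩
  have hsub : Δ_[1] ^[l] (fun n => Z i 1 n - Z i 0 n) n =
      Δ_[1] ^[l] (Z i 1) n - Δ_[1] ^[l] (Z i 0) n := by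
    simp only [fwdDiff_iter_eq_sum_shift, smul_sub, Finset.sum_sub_distrib]
  rw [hsub]
  refine norm_image_sub_le_of_norm_deriv_le_segment_01' (f := fun θ => Δ_[1] ^[l] (Z i θ) n)
    (fun θ hθ => hasDerivWithinAt_fwdDiff_iter fun j hj => hZ i j (hj.trans_lt hn) θ hθ)
    fun θ hθ => hC (i, ⟨θ, Set.Ico_subset_Icc_self hθ⟩) l hl n hn

end IsBigO

theorem isBigO_node {T : ℝ} (hT : ∀ i, ∀ n < 𝒢.card i, n * 𝒢.step i ≤ T) :
    𝒢.IsBigO 0 m fun i n => n * 𝒢.step i := by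
  have bound : 𝒢.IsBigO 0 0 fun i n => n * 𝒢.step i := isBigO_zero_iff.mpr ⟨T, fun i n hn => by
    have := 𝒢.step_pos i
    simpa [abs_of_pos this] using hT i n hn⟩
  rcases m with _ | m
  · exact bound
  · refine isBigO_succ_iff.mpr ⟨bound, ?_⟩
    have hΔ (i : ι) : Δ_[1] (fun n : ℕ => n * 𝒢.step i) = fun _ => 𝒢.step i := by
      funext n
      simp only [fwdDiff]
      push_cast
      ring
    simp only [hΔ]
    exact isBigO_const ⟨1, fun i => by simp [abs_of_pos (𝒢.step_pos i), dropLast]⟩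

end GridFamily

section BoundedDerivatives

variable {Y Z : Type*} [NormedAddCommGroup Y] [NormedSpace ℝ Y] [NormedAddCommGroup Z]
  [NormedSpace ℝ Z] {D : Set Y} {f : Y → Z} {m : ℕ}

/-- `f` is of class `C^m` on `D`, with derivatives of order at most `m` bounded on `D`. -/
def HasBoundedDerivsOn (m : ℕ) (f : Y → Z) (D : Set Y) : Prop :=
  ContDiffOn ℝ m f D ∧ ∃ C, ∀ j ≤ m, ∀ x ∈ D, ‖iteratedFDerivWithin ℝ j f D x‖ ≤ C

theorem HasBoundedDerivsOn.of_le {m' : ℕ} (hf : HasBoundedDerivsOn m f D) (hm : m' ≤ m) :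
    HasBoundedDerivsOn m' f D :=
  ⟨hf.1.of_le (by exact_mod_cast hm), hf.2.imp fun _ hC j hj => hC j (hj.trans hm)⟩

theorem HasBoundedDerivsOn.inter_isOpen {U : Set Y} (hf : HasBoundedDerivsOn m f D)
    (hU : IsOpen U) : HasBoundedDerivsOn m f (D ∩ U) :=
  ⟨hf.1.mono Set.inter_subset_left, hf.2.imp fun _ hC j hj x hx => by
    simpa only [iteratedFDerivWithin_inter_open hU hx.2] using hC j hj x hx.1⟩

theorem HasBoundedDerivsOn.exists_norm_le (hf : HasBoundedDerivsOn m f D) :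
    ∃ C, ∀ x ∈ D, ‖f x‖ ≤ C :=
  hf.2.imp fun _ hC x hx => by simpa only [norm_iteratedFDerivWithin_zero] using hC 0 m.zero_le x hx

theorem HasBoundedDerivsOn.fderivWithin (hD : UniqueDiffOn ℝ D)
    (hf : HasBoundedDerivsOn (m + 1) f D) : HasBoundedDerivsOn m (fderivWithin ℝ f D) D := by
  refine ⟨hf.1.fderivWithin hD (by exact_mod_cast le_rfl), hf.2.imp fun C hC j hj x hx => ?_⟩
  rw [norm_iteratedFDerivWithin_fderivWithin hD hx]
  exact hC (j + 1) (by omega) x hx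

theorem HasBoundedDerivsOn.hasFDerivWithinAt (hf : HasBoundedDerivsOn (m + 1) f D) {x : Y}
    (hx : x ∈ D) : HasFDerivWithinAt f (_root_.fderivWithin ℝ f D x) D x :=
  (hf.1.differentiableOn (by simp) x hx).hasFDerivWithinAt

theorem HasBoundedDerivsOn.exists_norm_sub_le (hconv : Convex ℝ D) (hD : UniqueDiffOn ℝ D)
    (hf : HasBoundedDerivsOn (m + 1) f D) :
    ∃ C, 0 < C ∧ ∀ x ∈ D, ∀ y ∈ D, ‖f y - f x‖ ≤ C * ‖y - x‖ := by
  obtain ⟨C, hC⟩ := (hf.fderivWithin hD).exists_norm_le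
  exact ⟨max C 1, by positivity, fun x hx y hy =>
    hconv.norm_image_sub_le_of_norm_hasFDerivWithin_le (fun _ => hf.hasFDerivWithinAt)
      (fun z hz => (hC z hz).trans (le_max_left _ _)) hx hy⟩

theorem HasBoundedDerivsOn.hasDerivWithinAt_comp_segment (hconv : Convex ℝ D)
    (hf : HasBoundedDerivsOn (m + 1) f D) {x e : Y} (hx : x ∈ D) (hxe : x + e ∈ D) {θ : ℝ}
    (hθ : θ ∈ Set.Icc (0 : ℝ) 1) :
    HasDerivWithinAt (fun θ : ℝ => f (x + θ • e)) (_root_.fderivWithin ℝ f D (x + θ • e) e)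
      (Set.Icc 0 1) θ := by
  have hseg : HasDerivWithinAt (fun θ : ℝ => x + θ • e) e (Set.Icc 0 1) θ := by
    simpa using ((hasDerivAt_id θ).smul_const e).const_add x |>.hasDerivWithinAt
  exact (hf.hasFDerivWithinAt (hconv.add_smul_mem hx hxe hθ)).comp_hasDerivWithinAt θ hseg
    fun θ' hθ' => hconv.add_smul_mem hx hxe hθ'

theorem exists_isOpen_hasBoundedDerivsOn {S K : Set Y} (hf : ContDiffOn ℝ m f S)
    (hS : UniqueDiffOn ℝ S) (hK : IsCompact K) (hKS : K ⊆ S) :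
    ∃ U, IsOpen U ∧ K ⊆ U ∧ HasBoundedDerivsOn m f (S ∩ U) := by
  let size (x : Y) : ℝ := ∑ j ∈ range (m + 1), ‖iteratedFDerivWithin ℝ j f S x‖
  have hsize : ContinuousOn size S := continuousOn_finsetSum _ fun j hj =>
    (hf.continuousOn_iteratedFDerivWithin
      (by exact_mod_cast Finset.mem_range_succ_iff.mp hj) hS).norm
  obtain ⟨C, hC⟩ := (hK.image_of_continuousOn (hsize.mono hKS)).bddAbove
  obtain ⟨U, hU, hUS⟩ := continuousOn_iff'.mp hsize (Set.Iio (C + 1)) isOpen_Iio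
  have hKU : K ⊆ U := fun x hx =>
    (hUS.subset ⟨(hC (Set.mem_image_of_mem size hx)).trans_lt (lt_add_one C), hKS hx⟩).1
  refine ⟨U, hU, hKU, hf.mono Set.inter_subset_left, C + 1, fun j hj x hx => ?_⟩
  rw [iteratedFDerivWithin_inter_open hU hx.2]
  have hx_lt : size x < C + 1 := (hUS.superset ⟨hx.2, hx.1⟩).1
  exact (Finset.single_le_sum (f := fun j => ‖iteratedFDerivWithin ℝ j f S x‖)
    (fun _ _ => norm_nonneg _) (mem_range_succ_iff.mpr hj)).trans hx_lt.le

theorem hasBoundedDerivsOn_of_isCompact (hf : ContDiffOn ℝ m f D)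
    (hD : UniqueDiffOn ℝ D) (hcomp : IsCompact D) : HasBoundedDerivsOn m f D := by
  obtain ⟨U, -, hDU, h⟩ := exists_isOpen_hasBoundedDerivsOn hf hD hcomp subset_rfl
  rwa [Set.inter_eq_left.mpr hDU] at h

end BoundedDerivatives

namespace GridFamily

-- The induction of `IsBigO.comp` on the order passes from values in `Z` to values in `Y →L[ℝ] Z`,
-- which has to live in the same universe.
universe v w

variable {ι : Type*} {Y : Type v} [NormedAddCommGroup Y] [NormedSpace ℝ Y]
  {Z : Type (max v w)} [NormedAddCommGroup Z] [NormedSpace ℝ Z] {𝒢 : GridFamily ι} {r m : ℕ}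
  {D : Set Y} {f : Y → Z} {a d : ι → ℕ → Y}

theorem IsBigO.smul_unitInterval (hd : 𝒢.IsBigO r m d) :
    (𝒢.comap (Prod.fst : ι × Set.Icc (0 : ℝ) 1 → ι)).IsBigO r m
      fun p n => (p.2 : ℝ) • d p.1 n := by
  rw [← zero_add r]
  refine (hd.comap Prod.fst).smul_of_le ⟨1, fun p => ?_⟩
  simpa [abs_of_nonneg p.2.2.1] using p.2.2.2

theorem isBigO_comp_add_sub_of_fderivWithin (hconv : Convex ℝ D)
    (hf : HasBoundedDerivsOn (m + 1) f D) (ha : ∀ i, ∀ n < 𝒢.card i, a i n ∈ D)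
    (had : ∀ i, ∀ n < 𝒢.card i, a i n + d i n ∈ D) (hd : 𝒢.IsBigO r m d)
    (hf' : (𝒢.comap (Prod.fst : ι × Set.Icc (0 : ℝ) 1 → ι)).IsBigO 0 m
      fun p n => fderivWithin ℝ f D (a p.1 n + (p.2 : ℝ) • d p.1 n)) :
    𝒢.IsBigO r m fun i n => f (a i n + d i n) - f (a i n) := by
  rw [← zero_add r]
  refine (IsBigO.sub_of_hasDerivWithinAt (Z := fun i θ n => f (a i n + θ • d i n))
    (fun i n hn θ hθ => hf.hasDerivWithinAt_comp_segment hconv (ha i n hn) (had i n hn) hθ)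
    (hf'.clm_apply (hd.comap Prod.fst))).congr fun i n _ => ?_
  rw [one_smul, zero_smul, add_zero]

theorem IsBigO.comp (hconv : Convex ℝ D) (hD : UniqueDiffOn ℝ D) (hf : HasBoundedDerivsOn m f D)
    (ha_mem : ∀ i, ∀ n < 𝒢.card i, a i n ∈ D) (ha : 𝒢.IsBigO 0 m a) :
    𝒢.IsBigO 0 m fun i n => f (a i n) := by
  induction m generalizing ι Z with
  | zero =>
    obtain ⟨C, hC⟩ := hf.exists_norm_le
    exact isBigO_zero_iff.mpr ⟨C, fun i n hn => by simpa using hC _ (ha_mem i n hn)⟩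
  | succ m ih =>
    obtain ⟨C, hC⟩ := hf.exists_norm_le
    refine isBigO_succ_iff.mpr
      ⟨isBigO_zero_iff.mpr ⟨C, fun i n hn => by simpa using hC _ (ha_mem i n hn)⟩, ?_⟩
    have hmem (i : ι) (n : ℕ) (hn : n < 𝒢.dropLast.card i) : a i n ∈ D :=
      ha_mem i n (hn.trans_le (Nat.sub_le _ 1))
    have hmem' (i : ι) (n : ℕ) (hn : n < 𝒢.dropLast.card i) : a i n + Δ_[1] (a i) n ∈ D := by
      rw [fwdDiff, add_sub_cancel]
      exact ha_mem i (n + 1) (by have : n < 𝒢.card i - 1 := hn; omega)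
    have hΔ := (isBigO_succ_iff.mp ha).2
    have hpath := ((ha.of_le m.le_succ).dropLast.comap
      (Prod.fst : ι × Set.Icc (0 : ℝ) 1 → ι)).add (hΔ.smul_unitInterval.weaken (Nat.zero_le _))
    have hf' := ih (hf.fderivWithin hD) (fun p n hn =>
      hconv.add_smul_mem (hmem p.1 n hn) (hmem' p.1 n hn) p.2.2) hpath
    refine (isBigO_comp_add_sub_of_fderivWithin hconv hf hmem hmem' hΔ hf').congr fun i n _ => ?_
    simp only [fwdDiff, add_sub_cancel]

theorem isBigO_comp_add_sub (hconv : Convex ℝ D) (hD : UniqueDiffOn ℝ D)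
    (hf : HasBoundedDerivsOn (m + 1) f D) (ha_mem : ∀ i, ∀ n < 𝒢.card i, a i n ∈ D)
    (had_mem : ∀ i, ∀ n < 𝒢.card i, a i n + d i n ∈ D) (ha : 𝒢.IsBigO 0 m a)
    (hd : 𝒢.IsBigO r m d) : 𝒢.IsBigO r m fun i n => f (a i n + d i n) - f (a i n) :=
  isBigO_comp_add_sub_of_fderivWithin hconv hf ha_mem had_mem hd <|
    IsBigO.comp hconv hD (hf.fderivWithin hD)
      (fun p n hn => hconv.add_smul_mem (ha_mem p.1 n hn) (had_mem p.1 n hn) p.2.2)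
      ((ha.comap Prod.fst).add (hd.smul_unitInterval.weaken (Nat.zero_le _)))

theorem isBigO_comp_add_sub_sub_fderivWithin (hconv : Convex ℝ D) (hD : UniqueDiffOn ℝ D)
    (hf : HasBoundedDerivsOn (m + 2) f D) (ha_mem : ∀ i, ∀ n < 𝒢.card i, a i n ∈ D)
    (had_mem : ∀ i, ∀ n < 𝒢.card i, a i n + d i n ∈ D) (ha : 𝒢.IsBigO 0 m a)
    (hd : 𝒢.IsBigO r m d) :
    𝒢.IsBigO (r + r) m
      fun i n => f (a i n + d i n) - f (a i n) - fderivWithin ℝ f D (a i n) (d i n) := by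
  have hf' := (isBigO_comp_add_sub hconv hD (hf.fderivWithin hD)
    (fun p n hn => ha_mem p.1 n hn)
    (fun p n hn => hconv.add_smul_mem (ha_mem p.1 n hn) (had_mem p.1 n hn) p.2.2)
    (ha.comap Prod.fst) hd.smul_unitInterval).clm_apply (hd.comap Prod.fst)
  refine (IsBigO.sub_of_hasDerivWithinAt
    (Z := fun i θ n => f (a i n + θ • d i n) - θ • fderivWithin ℝ f D (a i n) (d i n))
    (Z' := fun i θ n =>
      (fderivWithin ℝ f D (a i n + θ • d i n) - fderivWithin ℝ f D (a i n)) (d i n))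
    (fun i n hn θ hθ => ?_) hf').congr fun i n _ => ?_
  · have hlin := (hasDerivAt_id θ).smul_const (fderivWithin ℝ f D (a i n) (d i n))
    simpa using (hf.hasDerivWithinAt_comp_segment hconv (ha_mem i n hn) (had_mem i n hn) hθ).fun_sub
      hlin.hasDerivWithinAt
  · simp only [one_smul, zero_smul, add_zero, sub_zero]
    abel

end GridFamily

section Quadrature

variable {ι E : Type*} [NormedAddCommGroup E] [NormedSpace ℝ E] {𝒢 : GridFamily ι} {m r : ℕ}
  {T : ℝ} {u u' : ℝ → E}

theorem contDiffOn_of_hasDerivWithinAt_Icc (hT : 0 < T)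
    (hu' : ∀ t ∈ Set.Icc 0 T, HasDerivWithinAt u (u' t) (Set.Icc 0 T) t)
    (hu : ContDiffOn ℝ (m + 1) u (Set.Icc 0 T)) : ContDiffOn ℝ m u' (Set.Icc 0 T) :=
  (((contDiffOn_succ_iff_derivWithin (uniqueDiffOn_Icc hT)).mp hu).2.2).congr fun t ht =>
    ((hu' t ht).derivWithin (uniqueDiffOn_Icc hT t ht)).symm

variable {J : Type*} [Fintype J] {a b c : J → ℝ}

/-- The defect at `t`, with step `h`, of the Hermite quadrature rule
`∑ j, (a j * u (t + c j * h) + b j * h * u' (t + c j * h)) ≈ 0`. -/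
noncomputable def hermiteDefect (a b c : J → ℝ) (u u' : ℝ → E) (t h : ℝ) : E :=
  ∑ j, (a j • u (t + c j * h) + (b j * h) • u' (t + c j * h))

/-- The Hermite quadrature rule with coefficients `a`, `b` and nodes `c` is exact on polynomials of
degree at most `r`, expressed through the monomials with `t = 0` and `h = 1`. For `l = 0` the
truncated exponent `l - 1` is multiplied by zero. -/
def HermiteExact (r : ℕ) (a b c : J → ℝ) : Prop :=
  ∀ l ≤ r, ∑ j, (a j * c j ^ l + b j * (l * c j ^ (l - 1))) = 0

theorem HermiteExact.sum_eq_zero (h : HermiteExact r a b c) : ∑ j, a j = 0 := by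
  simpa using h 0 r.zero_le

theorem HermiteExact.deriv (h : HermiteExact (r + 1) a b c) :
    HermiteExact r (fun j => a j * c j + b j) (fun j => b j * c j) c := by
  intro l hl
  rw [← h (l + 1) (by omega)]
  refine Finset.sum_congr rfl fun j _ => ?_
  rcases l with _ | l
  · simp
  · simp only [Nat.cast_add, Nat.cast_one, add_tsub_cancel_right]
    ring

theorem hasDerivWithinAt_hermiteDefect {u'' : ℝ → E} (hc : ∀ j, c j ∈ Set.Icc (0 : ℝ) 1)
    (hu' : ∀ t ∈ Set.Icc 0 T, HasDerivWithinAt u (u' t) (Set.Icc 0 T) t)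
    (hu'' : ∀ t ∈ Set.Icc 0 T, HasDerivWithinAt u' (u'' t) (Set.Icc 0 T) t)
    {t h θ : ℝ} (ht : ∀ c ∈ Set.Icc (0 : ℝ) 1, t + c * h ∈ Set.Icc 0 T)
    (hθ : θ ∈ Set.Icc (0 : ℝ) 1) :
    HasDerivWithinAt (fun θ => hermiteDefect a b c u u' t (θ * h))
      (h • hermiteDefect (fun j => a j * c j + b j) (fun j => b j * c j) c u' u'' t (θ * h))
      (Set.Icc 0 1) θ := by
  simp only [hermiteDefect, Finset.smul_sum]
  refine HasDerivWithinAt.fun_sum fun j _ => ?_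
  have hnode {θ : ℝ} (hθ : θ ∈ Set.Icc (0 : ℝ) 1) : t + c j * (θ * h) ∈ Set.Icc 0 T := by
    rw [← mul_assoc]
    exact ht _ (unitInterval.mul_mem (hc j) hθ)
  have hinner : HasDerivWithinAt (fun θ => t + c j * (θ * h)) (c j * h) (Set.Icc 0 1) θ := by
    simpa using ((((hasDerivAt_id θ).mul_const h).const_mul (c j)).const_add t).hasDerivWithinAt
  have houter : HasDerivWithinAt (fun θ => b j * (θ * h)) (b j * h) (Set.Icc 0 1) θ := by
    simpa using (((hasDerivAt_id θ).mul_const h).const_mul (b j)).hasDerivWithinAt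
  have hcomp {v v' : ℝ → E} (hv : ∀ t ∈ Set.Icc 0 T, HasDerivWithinAt v (v' t) (Set.Icc 0 T) t) :
      HasDerivWithinAt (fun θ => v (t + c j * (θ * h))) ((c j * h) • v' (t + c j * (θ * h)))
        (Set.Icc 0 1) θ :=
    (hv _ (hnode hθ)).scomp θ hinner fun _ => hnode
  convert ((hcomp hu').fun_const_smul (a j)).fun_add (houter.fun_smul (hcomp hu'')) using 1
  module

namespace GridFamily

/-- Every time step `[n * step i, (n + 1) * step i]` starting at a node is contained in `[0, T]`. -/
def StepsWithin (𝒢 : GridFamily ι) (T : ℝ) : Prop :=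
  ∀ i, ∀ n < 𝒢.card i, n * 𝒢.step i + 𝒢.step i ≤ T

theorem StepsWithin.add_mul_mem (h𝒢 : 𝒢.StepsWithin T) {i : ι} {n : ℕ} (hn : n < 𝒢.card i) {c : ℝ}
    (hc : c ∈ Set.Icc (0 : ℝ) 1) : n * 𝒢.step i + c * 𝒢.step i ∈ Set.Icc 0 T := by
  have hk := 𝒢.step_pos i
  have hck : c * 𝒢.step i ≤ 𝒢.step i := mul_le_of_le_one_left hk.le hc.2
  have hck₀ : 0 ≤ c * 𝒢.step i := mul_nonneg hc.1 hk.le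
  exact ⟨by positivity, (add_le_add_right hck _).trans (h𝒢 i n hn)⟩

theorem StepsWithin.node_mem (h𝒢 : 𝒢.StepsWithin T) {i : ι} {n : ℕ} (hn : n < 𝒢.card i) :
    n * 𝒢.step i ∈ Set.Icc 0 T := by
  simpa using h𝒢.add_mul_mem hn (c := 0) (by simp)

theorem isBigO_mul_step {c : ι → ℝ} (hc : ∀ i, c i ∈ Set.Icc (0 : ℝ) 1) :
    𝒢.IsBigO 1 m fun i _ => c i * 𝒢.step i := by
  refine isBigO_const ⟨1, fun i => ?_⟩
  rw [Real.norm_of_nonneg (mul_nonneg (hc i).1 (𝒢.step_pos i).le), pow_one]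
  exact mul_le_mul_of_nonneg_right (hc i).2 (𝒢.step_pos i).le

theorem StepsWithin.isBigO_time (h𝒢 : 𝒢.StepsWithin T) {c : ι → ℝ}
    (hc : ∀ i, c i ∈ Set.Icc (0 : ℝ) 1) : 𝒢.IsBigO 0 m fun i n => n * 𝒢.step i + c i * 𝒢.step i :=
  (isBigO_node fun _ _ hn => (h𝒢.node_mem hn).2).add ((isBigO_mul_step hc).weaken (Nat.zero_le _))

theorem isBigO_sample (hT : 0 < T) (h𝒢 : 𝒢.StepsWithin T) (hu : ContDiffOn ℝ m u (Set.Icc 0 T))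
    {c : ι → ℝ} (hc : ∀ i, c i ∈ Set.Icc (0 : ℝ) 1) :
    𝒢.IsBigO 0 m fun i n => u (n * 𝒢.step i + c i * 𝒢.step i) :=
  IsBigO.comp (convex_Icc 0 T) (uniqueDiffOn_Icc hT)
    (hasBoundedDerivsOn_of_isCompact hu (uniqueDiffOn_Icc hT) isCompact_Icc)
    (fun i _ hn => h𝒢.add_mul_mem hn (hc i)) (h𝒢.isBigO_time hc)

theorem isBigO_sample_sub (hT : 0 < T) (h𝒢 : 𝒢.StepsWithin T)
    (hu : ContDiffOn ℝ (m + 1) u (Set.Icc 0 T)) {c : ι → ℝ} (hc : ∀ i, c i ∈ Set.Icc (0 : ℝ) 1) :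
    𝒢.IsBigO 1 m fun i n => u (n * 𝒢.step i + c i * 𝒢.step i) - u (n * 𝒢.step i) :=
  isBigO_comp_add_sub (convex_Icc 0 T) (uniqueDiffOn_Icc hT)
    (hasBoundedDerivsOn_of_isCompact hu (uniqueDiffOn_Icc hT) isCompact_Icc)
    (fun _ _ hn => h𝒢.node_mem hn) (fun i _ hn => h𝒢.add_mul_mem hn (hc i))
    (isBigO_node fun _ _ hn => (h𝒢.node_mem hn).2) (isBigO_mul_step hc)

theorem isBigO_mul_step_smul {y : ι → ℕ → E} (hy : 𝒢.IsBigO r m y) {σ : ι → ℝ}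
    (hσ : ∀ i, σ i ∈ Set.Icc (0 : ℝ) 1) (β : ℝ) :
    𝒢.IsBigO (r + 1) m fun i n => (β * (σ i * 𝒢.step i)) • y i n := by
  rw [add_comm]
  refine hy.smul_of_le ⟨|β|, fun i => ?_⟩
  have hk := (𝒢.step_pos i).le
  rw [abs_mul, abs_of_nonneg (mul_nonneg (hσ i).1 hk), pow_one]
  exact mul_le_mul_of_nonneg_left (mul_le_of_le_one_left hk (hσ i).2) (abs_nonneg β)

theorem isBigO_hermiteDefect_of_sum_eq_zero (hT : 0 < T) (h𝒢 : 𝒢.StepsWithin T)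
    (hu' : ∀ t ∈ Set.Icc 0 T, HasDerivWithinAt u (u' t) (Set.Icc 0 T) t)
    (hu : ContDiffOn ℝ (m + 1) u (Set.Icc 0 T)) (hc : ∀ j, c j ∈ Set.Icc (0 : ℝ) 1)
    (ha : ∑ j, a j = 0) {σ : ι → ℝ} (hσ : ∀ i, σ i ∈ Set.Icc (0 : ℝ) 1) :
    𝒢.IsBigO 1 m
      fun i n => hermiteDefect a b c u u' (n * 𝒢.step i) (σ i * 𝒢.step i) := by
  have hcσ (j : J) (i : ι) : c j * σ i ∈ Set.Icc (0 : ℝ) 1 := unitInterval.mul_mem (hc j) (hσ i)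
  have hu'_smooth := contDiffOn_of_hasDerivWithinAt_Icc hT hu' hu
  refine (IsBigO.sum Finset.univ fun j _ =>
    ((isBigO_sample_sub hT h𝒢 hu (hcσ j)).const_smul (a j)).add
      (isBigO_mul_step_smul (isBigO_sample hT h𝒢 hu'_smooth (hcσ j)) hσ (b j))).congr
    fun i n _ => ?_
  simp only [hermiteDefect, mul_assoc, smul_sub, Finset.sum_add_distrib,
    Finset.sum_sub_distrib, ← Finset.sum_smul, ha, zero_smul, sub_zero]

theorem isBigO_hermiteDefect (hT : 0 < T) (h𝒢 : 𝒢.StepsWithin T)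
    (hu' : ∀ t ∈ Set.Icc 0 T, HasDerivWithinAt u (u' t) (Set.Icc 0 T) t)
    (hu : ContDiffOn ℝ (m + r + 1 : ℕ) u (Set.Icc 0 T)) (hc : ∀ j, c j ∈ Set.Icc (0 : ℝ) 1)
    (hr : HermiteExact r a b c) {σ : ι → ℝ} (hσ : ∀ i, σ i ∈ Set.Icc (0 : ℝ) 1) :
    𝒢.IsBigO (r + 1) m
      fun i n => hermiteDefect a b c u u' (n * 𝒢.step i) (σ i * 𝒢.step i) := by
  induction r generalizing ι u u' a b with
  | zero =>
    exact isBigO_hermiteDefect_of_sum_eq_zero hT h𝒢 hu' (by simpa using hu) hc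
      hr.sum_eq_zero hσ
  | succ r ih =>
    have hu'_smooth : ContDiffOn ℝ (m + r + 1 : ℕ) u' (Set.Icc 0 T) :=
      contDiffOn_of_hasDerivWithinAt_Icc hT hu' (by exact_mod_cast hu)
    have hu'' (t : ℝ) (ht : t ∈ Set.Icc 0 T) :=
      (hu'_smooth.differentiableOn (by simp) t ht).hasDerivWithinAt
    have hderiv := isBigO_mul_step_smul (ih (𝒢 := 𝒢.comap (Prod.fst : ι × Set.Icc (0 : ℝ) 1 → ι))
      (fun p => h𝒢 p.1) hu'' hu'_smooth hr.deriv (σ := fun p => p.2 * σ p.1)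
      (fun p => unitInterval.mul_mem p.2.2 (hσ p.1))) (fun p => hσ p.1) 1
    refine (IsBigO.sub_of_hasDerivWithinAt
      (Z := fun i θ n => hermiteDefect a b c u u' (n * 𝒢.step i) (θ * (σ i * 𝒢.step i)))
      (Z' := fun i θ n => (σ i * 𝒢.step i) • hermiteDefect (fun j => a j * c j + b j)
        (fun j => b j * c j) c u' (derivWithin u' (Set.Icc 0 T)) (n * 𝒢.step i)
          (θ * (σ i * 𝒢.step i)))
      (fun i n hn θ hθ => ?_) ?_).congr fun i n _ => ?_
    · refine hasDerivWithinAt_hermiteDefect hc hu' hu'' (fun c hc => ?_) hθ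
      rw [← mul_assoc]
      exact h𝒢.add_mul_mem hn (unitInterval.mul_mem hc (hσ i))
    · simpa only [one_mul, mul_assoc, comap_step] using hderiv
    · simp [hermiteDefect, ← Finset.sum_smul, hr.sum_eq_zero]

end GridFamily

end Quadrature

section RK4Errors

variable {E : Type*} [NormedAddCommGroup E] [NormedSpace ℝ E] {T δ : ℝ} {q : ℕ} {u : ℝ → E}
  {G : ℝ × E → E}

/-- The errors at times in `[0, T]` that are smaller than `δ`. -/
def errorTube (E : Type*) [NormedAddCommGroup E] (T δ : ℝ) : Set (ℝ × E) :=
  Set.Icc 0 T ×ˢ Metric.ball 0 δ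

theorem mem_errorTube {E : Type*} [NormedAddCommGroup E] {T δ t : ℝ} {e : E}
    (ht : t ∈ Set.Icc 0 T) (he : ‖e‖ < δ) : (t, e) ∈ errorTube E T δ :=
  ⟨ht, mem_ball_zero_iff.mpr he⟩

/-- `G` is the vector field of a differential equation in the coordinates centred at its solution
`u`: if `u' = F(t, u)` then `G (t, e) = F(t, u t + e)`, so that `G (t, 0)` is the derivative of `u`.
The numbers of derivatives are those under which the first `q + 1` differences of the error of the
fourth-order Runge–Kutta method are of order four. -/
structure IsErrorField (T δ : ℝ) (q : ℕ) (u : ℝ → E) (G : ℝ × E → E) : Prop where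
  T_pos : 0 < T
  δ_pos : 0 < δ
  contDiffOn : ContDiffOn ℝ (q + 5 : ℕ) u (Set.Icc 0 T)
  hasDerivWithinAt : ∀ t ∈ Set.Icc 0 T, HasDerivWithinAt u (G (t, 0)) (Set.Icc 0 T) t
  hasBoundedDerivsOn : HasBoundedDerivsOn (q + 2) G (errorTube E T δ)

/-- The error of the second stage value of a Runge–Kutta step of size `h` from `u t + e`,
as an approximation of `u (t + h / 2)`. -/
noncomputable def rk4Error₂ (u : ℝ → E) (G : ℝ × E → E) (t h : ℝ) (e : E) : E :=
  u t + e + (h / 2) • G (t, e) - u (t + h / 2)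

/-- The error of the third stage value, as an approximation of `u (t + h / 2)`. -/
noncomputable def rk4Error₃ (u : ℝ → E) (G : ℝ × E → E) (t h : ℝ) (e : E) : E :=
  u t + e + (h / 2) • G (t + h / 2, rk4Error₂ u G t h e) - u (t + h / 2)

/-- The error of the fourth stage value, as an approximation of `u (t + h)`. -/
noncomputable def rk4Error₄ (u : ℝ → E) (G : ℝ × E → E) (t h : ℝ) (e : E) : E :=
  u t + e + h • G (t + h / 2, rk4Error₃ u G t h e) - u (t + h)

/-- The increment of the error in a Runge–Kutta step of size `h` from `u t + e`. -/
noncomputable def rk4ErrorIncrement (u : ℝ → E) (G : ℝ × E → E) (t h : ℝ) (e : E) : E :=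
  (h / 6) • (G (t, e) + (2 : ℝ) • G (t + h / 2, rk4Error₂ u G t h e) +
    (2 : ℝ) • G (t + h / 2, rk4Error₃ u G t h e) + G (t + h, rk4Error₄ u G t h e)) -
      (u (t + h) - u t)

/-- The derivative of `G` in the direction of the error, along the solution. -/
noncomputable def errorJacobian (T δ : ℝ) (G : ℝ × E → E) (t : ℝ) : E →L[ℝ] E :=
  (fderivWithin ℝ G (errorTube E T δ) (t, 0)).comp (ContinuousLinearMap.inr ℝ ℝ E)

theorem rk4Step_eq_add_rk4ErrorIncrement {F : ℝ → E → E} (hG : ∀ t e, G (t, e) = F t (u t + e))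
    (t h : ℝ) (x : E) :
    rk4Step F t h x = u (t + h) + (x - u t + rk4ErrorIncrement u G t h (x - u t)) := by
  simp only [rk4Step, rk4ErrorIncrement, rk4Error₄, rk4Error₃, rk4Error₂, hG, add_sub_cancel]
  abel

/-- The error `e` and the stage errors of the Runge–Kutta step from `u t + e` are smaller than
`δ`. -/
structure RK4ErrorsLT (δ : ℝ) (u : ℝ → E) (G : ℝ × E → E) (t h : ℝ) (e : E) : Prop where
  norm_lt : ‖e‖ < δ
  error₂_lt : ‖rk4Error₂ u G t h e‖ < δ
  error₃_lt : ‖rk4Error₃ u G t h e‖ < δ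
  error₄_lt : ‖rk4Error₄ u G t h e‖ < δ

theorem convex_errorTube : Convex ℝ (errorTube E T δ) := (convex_Icc 0 T).prod (convex_ball 0 δ)

theorem uniqueDiffOn_errorTube (hT : 0 < T) : UniqueDiffOn ℝ (errorTube E T δ) :=
  (uniqueDiffOn_Icc hT).prod Metric.isOpen_ball.uniqueDiffOn

theorem IsErrorField.contDiffOn_errorJacobian (H : IsErrorField T δ q u G) :
    ContDiffOn ℝ (q + 1 : ℕ) (errorJacobian T δ G) (Set.Icc 0 T) := by
  have hG' : ContDiffOn ℝ (q + 1 : ℕ) (fderivWithin ℝ G (errorTube E T δ)) (errorTube E T δ) :=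
    (H.hasBoundedDerivsOn.fderivWithin (uniqueDiffOn_errorTube H.T_pos)).1
  have hcurve : ContDiffOn ℝ (q + 1 : ℕ) (fun t : ℝ => (t, (0 : E))) (Set.Icc 0 T) :=
    (contDiff_prodMk_left 0).contDiffOn
  exact (hG'.comp hcurve fun t ht => mem_errorTube ht (by simpa using H.δ_pos)).clm_comp
    contDiffOn_const

/-- The defect at `t`, with step `h`, of the Hermite quadrature rule with nodes `0`, `1/2`, `1`. -/
noncomputable def threePointDefect (a₀ a₁ a₂ b₀ b₁ b₂ : ℝ) (u u' : ℝ → E) (t h : ℝ) : E :=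
  a₀ • u t + a₁ • u (t + h / 2) + a₂ • u (t + h) +
    h • (b₀ • u' t + b₁ • u' (t + h / 2) + b₂ • u' (t + h))

end RK4Errors

namespace GridFamily

variable {ι E : Type*} [NormedAddCommGroup E] [NormedSpace ℝ E] {𝒢 : GridFamily ι} {m r q : ℕ}
  {T δ : ℝ} {u : ℝ → E} {G : ℝ × E → E} {e d : ι → ℕ → E}

/-- The one-step map `Φ t h` evaluated along the values `e` at the nodes of the grids. -/
abbrev along (𝒢 : GridFamily ι) (Φ : ℝ → ℝ → E → E) (e : ι → ℕ → E) (i : ι) (n : ℕ) : E :=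
  Φ (n * 𝒢.step i) (𝒢.step i) (e i n)

theorem isBigO_slope_sub (H : IsErrorField T δ q u G) (h𝒢 : 𝒢.StepsWithin T) (hm : m ≤ q)
    (hlt : ∀ i, ∀ n < 𝒢.card i, ‖d i n‖ < δ) (hd : 𝒢.IsBigO r m d) :
    𝒢.IsBigO r m fun i n => G (n * 𝒢.step i, d i n) - G (n * 𝒢.step i, 0) := by
  refine (isBigO_comp_add_sub (a := fun i n => (n * 𝒢.step i, (0 : E)))
    (d := fun i n => ((0 : ℝ), d i n)) convex_errorTube (uniqueDiffOn_errorTube H.T_pos)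
    (H.hasBoundedDerivsOn.of_le (by omega)) (fun i n hn => ?_) (fun i n hn => ?_)
    ((isBigO_node fun _ _ hn => (h𝒢.node_mem hn).2).prodMk (isBigO_const ⟨0, by simp⟩))
    ((isBigO_const ⟨0, by simp⟩).prodMk hd)).congr fun i n _ => by simp
  · exact mem_errorTube (h𝒢.node_mem hn) (by simpa using H.δ_pos)
  · simpa using mem_errorTube (h𝒢.node_mem hn) (hlt i n hn)

theorem isBigO_slope_linearization (H : IsErrorField T δ q u G) (h𝒢 : 𝒢.StepsWithin T) (hm : m ≤ q)
    (hlt : ∀ i, ∀ n < 𝒢.card i, ‖d i n‖ < δ) (hd : 𝒢.IsBigO r m d) {c : ℝ}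
    (hc : c ∈ Set.Icc (0 : ℝ) 1) :
    𝒢.IsBigO (r + r) m fun i n =>
      G (n * 𝒢.step i + c * 𝒢.step i, d i n) - G (n * 𝒢.step i + c * 𝒢.step i, 0) -
        errorJacobian T δ G (n * 𝒢.step i + c * 𝒢.step i) (d i n) := by
  refine (isBigO_comp_add_sub_sub_fderivWithin
    (a := fun i n => (n * 𝒢.step i + c * 𝒢.step i, (0 : E)))
    (d := fun i n => ((0 : ℝ), d i n)) convex_errorTube (uniqueDiffOn_errorTube H.T_pos)
    (H.hasBoundedDerivsOn.of_le (by omega)) (fun i n hn => ?_) (fun i n hn => ?_)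
    ((h𝒢.isBigO_time fun _ => hc).prodMk (isBigO_const ⟨0, by simp⟩))
    ((isBigO_const ⟨0, by simp⟩).prodMk hd)).congr fun i n _ => by simp [errorJacobian]
  · exact mem_errorTube (h𝒢.add_mul_mem hn hc) (by simpa using H.δ_pos)
  · simpa using mem_errorTube (h𝒢.add_mul_mem hn hc) (hlt i n hn)

theorem isBigO_errorJacobian (H : IsErrorField T δ q u G) (h𝒢 : 𝒢.StepsWithin T) (hm : m ≤ q)
    {c : ℝ} (hc : c ∈ Set.Icc (0 : ℝ) 1) :
    𝒢.IsBigO 0 m fun i n => errorJacobian T δ G (n * 𝒢.step i + c * 𝒢.step i) :=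
  isBigO_sample H.T_pos h𝒢
    (H.contDiffOn_errorJacobian.of_le (by exact_mod_cast hm.trans q.le_succ)) fun _ => hc

theorem isBigO_errorJacobian_sub (H : IsErrorField T δ q u G) (h𝒢 : 𝒢.StepsWithin T) (hm : m ≤ q)
    {c c' : ℝ} (hc : c ∈ Set.Icc (0 : ℝ) 1) (hc' : c' ∈ Set.Icc (0 : ℝ) 1) :
    𝒢.IsBigO 1 m fun i n => errorJacobian T δ G (n * 𝒢.step i + c * 𝒢.step i) -
      errorJacobian T δ G (n * 𝒢.step i + c' * 𝒢.step i) := by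
  have hJ := H.contDiffOn_errorJacobian.of_le (m := (m + 1 : ℕ)) (by exact_mod_cast by omega)
  refine ((isBigO_sample_sub H.T_pos h𝒢 hJ fun _ => hc).sub
    (isBigO_sample_sub H.T_pos h𝒢 hJ fun _ => hc')).congr fun i n _ => ?_
  abel

theorem isBigO_threePointDefect (H : IsErrorField T δ q u G) (h𝒢 : 𝒢.StepsWithin T) (hm : m ≤ q)
    (hr : r ≤ 4) {a₀ a₁ a₂ b₀ b₁ b₂ : ℝ}
    (horder : ∀ l ≤ r, a₀ * 0 ^ l + a₁ * (1 / 2) ^ l + a₂ +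
      l * (b₀ * 0 ^ (l - 1) + b₁ * (1 / 2) ^ (l - 1) + b₂) = 0) :
    𝒢.IsBigO (r + 1) m fun i n => threePointDefect a₀ a₁ a₂ b₀ b₁ b₂ u (fun t => G (t, 0))
      (n * 𝒢.step i) (𝒢.step i) := by
  have hnodes (j : Fin 3) : (![0, 1 / 2, 1] j : ℝ) ∈ Set.Icc (0 : ℝ) 1 := by
    fin_cases j <;> norm_num
  refine (isBigO_hermiteDefect H.T_pos h𝒢 H.hasDerivWithinAt
    (H.contDiffOn.of_le (by exact_mod_cast by omega)) (a := ![a₀, a₁, a₂]) (b := ![b₀, b₁, b₂])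
    hnodes (fun l hl => ?_) (σ := fun _ => 1) (by simp)).congr fun i n _ => ?_
  · refine Eq.trans ?_ (horder l hl)
    rw [Fin.sum_univ_three]
    simp only [Fin.isValue, Matrix.cons_val_zero, Matrix.cons_val_one, Matrix.cons_val, one_pow,
      mul_one]
    ring
  · simp only [threePointDefect, smul_add, hermiteDefect, one_mul, Fin.sum_univ_three, Fin.isValue,
      Matrix.cons_val_zero, zero_mul, add_zero, Matrix.cons_val_one, one_div_mul_eq_div,
      Matrix.cons_val]
    module

theorem isBigO_rk4Error₂ (H : IsErrorField T δ q u G) (h𝒢 : 𝒢.StepsWithin T)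
    (hδ : ∀ i, ∀ n < 𝒢.card i, RK4ErrorsLT δ u G (n * 𝒢.step i) (𝒢.step i) (e i n))
    (hm : m ≤ q) (he : 𝒢.IsBigO 4 m e) :
    𝒢.IsBigO 2 m (𝒢.along (rk4Error₂ u G) e) := by
  have hrule := isBigO_threePointDefect H h𝒢 hm (r := 1) (a₀ := 1) (a₁ := -1) (a₂ := 0)
    (b₀ := 1 / 2) (b₁ := 0) (b₂ := 0) (by norm_num) fun l hl => by interval_cases l <;> norm_num
  have hslope := isBigO_slope_sub H h𝒢 hm (fun i n hn => (hδ i n hn).norm_lt) he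
  refine ((hrule.add (he.weaken (by norm_num))).add
    ((hslope.step_smul (1 / 2)).weaken (by norm_num))).congr fun i n _ => ?_
  simp only [along, rk4Error₂, threePointDefect]
  module

theorem isBigO_rk4Error₂_add_rk4Error₃ (H : IsErrorField T δ q u G) (h𝒢 : 𝒢.StepsWithin T)
    (hδ : ∀ i, ∀ n < 𝒢.card i, RK4ErrorsLT δ u G (n * 𝒢.step i) (𝒢.step i) (e i n))
    (hm : m ≤ q) (he : 𝒢.IsBigO 4 m e) :
    𝒢.IsBigO 3 m fun i n => 𝒢.along (rk4Error₂ u G) e i n + 𝒢.along (rk4Error₃ u G) e i n := by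
  have hrule := isBigO_threePointDefect H h𝒢 hm (r := 2) (a₀ := 2) (a₁ := -2) (a₂ := 0)
    (b₀ := 1 / 2) (b₁ := 1 / 2) (b₂ := 0) (by norm_num)
    fun l hl => by interval_cases l <;> norm_num
  have hslope₁ := isBigO_slope_sub H h𝒢 hm (fun i n hn => (hδ i n hn).norm_lt) he
  have hE₂ := isBigO_rk4Error₂ H h𝒢 hδ hm he
  have hslope₂ := isBigO_slope_linearization H h𝒢 hm
    (fun i n hn => (hδ i n hn).error₂_lt) hE₂ (c := 1 / 2) (by norm_num)
  have hJE := (isBigO_errorJacobian H h𝒢 hm (c := 1 / 2) (by norm_num)).clm_apply hE₂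
  refine ((hrule.add ((he.const_smul 2).weaken (by norm_num))).add
    (((hslope₁.weaken (by norm_num)).add
      ((hslope₂.weaken (by norm_num)).add hJE)).step_smul (1 / 2))).congr fun i n _ => ?_
  simp only [along, rk4Error₃, threePointDefect, one_div_mul_eq_div]
  linear_combination (norm := module) rk4Error₂.eq_1 u G (n * 𝒢.step i) (𝒢.step i) (e i n)

theorem isBigO_rk4Error₃ (H : IsErrorField T δ q u G) (h𝒢 : 𝒢.StepsWithin T)
    (hδ : ∀ i, ∀ n < 𝒢.card i, RK4ErrorsLT δ u G (n * 𝒢.step i) (𝒢.step i) (e i n))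
    (hm : m ≤ q) (he : 𝒢.IsBigO 4 m e) :
    𝒢.IsBigO 2 m (𝒢.along (rk4Error₃ u G) e) :=
  (((isBigO_rk4Error₂_add_rk4Error₃ H h𝒢 hδ hm he).weaken (by norm_num)).sub
    (isBigO_rk4Error₂ H h𝒢 hδ hm he)).congr fun _ _ _ => (add_sub_cancel_left _ _).symm

theorem isBigO_two_smul_add_rk4Error₄ (H : IsErrorField T δ q u G) (h𝒢 : 𝒢.StepsWithin T)
    (hδ : ∀ i, ∀ n < 𝒢.card i, RK4ErrorsLT δ u G (n * 𝒢.step i) (𝒢.step i) (e i n))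
    (hm : m ≤ q) (he : 𝒢.IsBigO 4 m e) :
    𝒢.IsBigO 4 m fun i n =>
      (2 : ℝ) • (𝒢.along (rk4Error₂ u G) e i n + 𝒢.along (rk4Error₃ u G) e i n) +
        𝒢.along (rk4Error₄ u G) e i n := by
  have hrule := isBigO_threePointDefect H h𝒢 hm (r := 3) (a₀ := 5) (a₁ := -4) (a₂ := -1)
    (b₀ := 1) (b₁ := 2) (b₂ := 0) (by norm_num) fun l hl => by interval_cases l <;> norm_num
  have hslope₁ := isBigO_slope_sub H h𝒢 hm (fun i n hn => (hδ i n hn).norm_lt) he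
  have hslope₂ := isBigO_slope_linearization H h𝒢 hm (fun i n hn => (hδ i n hn).error₂_lt)
    (isBigO_rk4Error₂ H h𝒢 hδ hm he) (c := 1 / 2) (by norm_num)
  have hslope₃ := isBigO_slope_linearization H h𝒢 hm (fun i n hn => (hδ i n hn).error₃_lt)
    (isBigO_rk4Error₃ H h𝒢 hδ hm he) (c := 1 / 2) (by norm_num)
  have hJE := (isBigO_errorJacobian H h𝒢 hm (c := 1 / 2) (by norm_num)).clm_apply
    (isBigO_rk4Error₂_add_rk4Error₃ H h𝒢 hδ hm he)
  refine ((hrule.add (he.const_smul 5)).add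
    ((((hslope₁.add (hslope₂.add hslope₃)).weaken (by norm_num)).add hJE).step_smul 1)).congr
    fun i n _ => ?_
  simp only [along, rk4Error₄, threePointDefect, one_div_mul_eq_div, map_add]
  linear_combination (norm := module)
    (2 : ℝ) • rk4Error₂.eq_1 u G (n * 𝒢.step i) (𝒢.step i) (e i n) +
    (2 : ℝ) • rk4Error₃.eq_1 u G (n * 𝒢.step i) (𝒢.step i) (e i n)

-- The stage errors enter linearly, as `2 J (E₂ + E₃) + J' E₄` with `J`, `J'` the Jacobians at the
-- middle and at the end of the step; as `J' - J = O(k)`, replacing `J'` by `J` costs `O(k⁴)`.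
theorem isBigO_rk4ErrorIncrement (H : IsErrorField T δ q u G) (h𝒢 : 𝒢.StepsWithin T)
    (hδ : ∀ i, ∀ n < 𝒢.card i, RK4ErrorsLT δ u G (n * 𝒢.step i) (𝒢.step i) (e i n))
    (hm : m ≤ q) (he : 𝒢.IsBigO 4 m e) :
    𝒢.IsBigO 5 m (𝒢.along (rk4ErrorIncrement u G) e) := by
  have hE₂ := isBigO_rk4Error₂ H h𝒢 hδ hm he
  have hE₃ := isBigO_rk4Error₃ H h𝒢 hδ hm he
  have hE := isBigO_two_smul_add_rk4Error₄ H h𝒢 hδ hm he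
  have hE₄ : 𝒢.IsBigO 3 m (𝒢.along (rk4Error₄ u G) e) :=
    ((hE.weaken (by norm_num)).sub
      ((isBigO_rk4Error₂_add_rk4Error₃ H h𝒢 hδ hm he).const_smul 2)).congr
      fun _ _ _ => (add_sub_cancel_left _ _).symm
  have simpson := isBigO_threePointDefect H h𝒢 hm (r := 4) (a₀ := 1) (a₁ := 0) (a₂ := -1)
    (b₀ := 1 / 6) (b₁ := 4 / 6) (b₂ := 1 / 6) (by norm_num)
    fun l hl => by interval_cases l <;> norm_num
  have hslope₁ := isBigO_slope_sub H h𝒢 hm (fun i n hn => (hδ i n hn).norm_lt) he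
  have hslope₂ := isBigO_slope_linearization H h𝒢 hm
    (fun i n hn => (hδ i n hn).error₂_lt) hE₂ (c := 1 / 2) (by norm_num)
  have hslope₃ := isBigO_slope_linearization H h𝒢 hm
    (fun i n hn => (hδ i n hn).error₃_lt) hE₃ (c := 1 / 2) (by norm_num)
  have hslope₄ := isBigO_slope_linearization H h𝒢 hm (fun i n hn => (hδ i n hn).error₄_lt)
    (hE₄.weaken (r := 2) (by norm_num)) (c := 1) (by norm_num)
  have hJE := (isBigO_errorJacobian H h𝒢 hm (c := 1 / 2) (by norm_num)).clm_apply hE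
  have hJ'E := (isBigO_errorJacobian_sub H h𝒢 hm (c := 1) (c' := 1 / 2) (by norm_num)
    (by norm_num)).clm_apply hE₄
  refine (simpson.add (((hslope₁.add (((hslope₂.add hslope₃).const_smul 2).add hslope₄)).add
    ((hJE.weaken (by norm_num)).add hJ'E)).step_smul (1 / 6))).congr fun i n _ => ?_
  simp only [along, rk4ErrorIncrement, threePointDefect, one_div_mul_eq_div, one_mul, map_add,
    map_smul, sub_apply]
  module

end GridFamily

section Stability

variable {E : Type*} [NormedAddCommGroup E] [NormedSpace ℝ E] {T δ Λ M : ℝ} {q : ℕ} {u : ℝ → E}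
  {G : ℝ × E → E}

theorem IsErrorField.norm_stage_error_lt (H : IsErrorField T δ q u G)
    (hM : ∀ z ∈ errorTube E T δ, ‖G z‖ ≤ M) {t c : ℝ} {e : E} {z : ℝ × E} (ht : 0 ≤ t)
    (hc : 0 ≤ c) (htc : t + c ≤ T) (he : ‖e‖ < δ / 2) (hcM : c * M ≤ δ / 4)
    (hz : z ∈ errorTube E T δ) : ‖u t + e + c • G z - u (t + c)‖ < δ := by
  have hu : ‖u (t + c) - u t‖ ≤ M * ‖t + c - t‖ :=
    (convex_Icc 0 T).norm_image_sub_le_of_norm_hasDerivWithin_le H.hasDerivWithinAt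
      (fun s hs => hM _ (mem_errorTube hs (by simpa using H.δ_pos)))
      ⟨ht, by linarith⟩ ⟨by linarith, htc⟩
  rw [add_sub_cancel_left, Real.norm_of_nonneg hc] at hu
  have hG : ‖c • G z‖ ≤ c * M := by
    rw [norm_smul, Real.norm_of_nonneg hc]
    exact mul_le_mul_of_nonneg_left (hM z hz) hc
  calc ‖u t + e + c • G z - u (t + c)‖ = ‖e + c • G z - (u (t + c) - u t)‖ := by congr 1; abel
    _ ≤ ‖e‖ + ‖c • G z‖ + ‖u (t + c) - u t‖ := norm_sub_le_of_le (norm_add_le _ _) le_rfl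
    _ < δ := by linarith

theorem IsErrorField.eventually_rk4ErrorsLT (H : IsErrorField T δ q u G) :
    ∀ᶠ h in 𝓝 (0 : ℝ), ∀ t e, 0 ≤ t → 0 ≤ h → t + h ≤ T → ‖e‖ < δ / 2 →
      RK4ErrorsLT δ u G t h e := by
  obtain ⟨M, hM⟩ := H.hasBoundedDerivsOn.exists_norm_le
  have hδ := H.δ_pos
  have hsmall : ∀ᶠ h in 𝓝 (0 : ℝ), h * M < δ / 4 :=
    (continuous_mul_const M).tendsto' 0 0 (zero_mul M) |>.eventually_lt_const (by positivity)
  filter_upwards [hsmall] with h hhM t e ht hh hth he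
  have he_lt : ‖e‖ < δ := by linarith
  have h₂ : ‖rk4Error₂ u G t h e‖ < δ := H.norm_stage_error_lt hM ht (by linarith) (by linarith) he
    (by linarith) (mem_errorTube ⟨ht, by linarith⟩ he_lt)
  have h₃ : ‖rk4Error₃ u G t h e‖ < δ := H.norm_stage_error_lt hM ht (by linarith) (by linarith) he
    (by linarith) (mem_errorTube ⟨by linarith, by linarith⟩ h₂)
  exact ⟨he_lt, h₂, h₃, H.norm_stage_error_lt hM ht hh hth he hhM.le
    (mem_errorTube ⟨by linarith, by linarith⟩ h₃)⟩

theorem norm_add_smul_sub_sub_le (x y e e' : E) {g g' : E} {c K : ℝ} (hc : 0 ≤ c)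
    (hg : ‖g - g'‖ ≤ K) :
    ‖x + e + c • g - y - (x + e' + c • g' - y)‖ ≤ ‖e - e'‖ + c * K := by
  calc ‖x + e + c • g - y - (x + e' + c • g' - y)‖ = ‖e - e' + c • (g - g')‖ := by
        congr 1; module
    _ ≤ ‖e - e'‖ + ‖c • (g - g')‖ := norm_add_le _ _
    _ ≤ ‖e - e'‖ + c * K := by rw [norm_smul, Real.norm_of_nonneg hc]; gcongr

theorem norm_rk4ErrorIncrement_sub_le
    (hΛ : ∀ x ∈ errorTube E T δ, ∀ y ∈ errorTube E T δ, ‖G y - G x‖ ≤ Λ * ‖y - x‖) {t h : ℝ}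
    {e e' : E} (ht : 0 ≤ t) (hh : 0 ≤ h) (hth : t + h ≤ T) (hΛ₀ : 0 ≤ Λ) (hhΛ : h * Λ ≤ 1)
    (he : RK4ErrorsLT δ u G t h e) (he' : RK4ErrorsLT δ u G t h e') :
    ‖rk4ErrorIncrement u G t h e - rk4ErrorIncrement u G t h e'‖ ≤ 2 * Λ * h * ‖e - e'‖ := by
  have hG {s K : ℝ} (hs₀ : 0 ≤ s) (hsT : s ≤ T) {x y : E} (hx : ‖x‖ < δ) (hy : ‖y‖ < δ)
      (hxy : ‖x - y‖ ≤ K) : ‖G (s, x) - G (s, y)‖ ≤ Λ * K := by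
    refine (hΛ _ (mem_errorTube ⟨hs₀, hsT⟩ hy) _ (mem_errorTube ⟨hs₀, hsT⟩ hx)).trans ?_
    simpa [Prod.norm_def] using mul_le_mul_of_nonneg_left hxy hΛ₀
  have hd : h * (Λ * ‖e - e'‖) ≤ ‖e - e'‖ := by
    rw [← mul_assoc]
    exact mul_le_of_le_one_left (norm_nonneg _) hhΛ
  have hhalf : 0 ≤ h / 2 := by linarith
  have hG₁ := hG ht (by linarith) he.norm_lt he'.norm_lt le_rfl
  have hE₂ : ‖rk4Error₂ u G t h e - rk4Error₂ u G t h e'‖ ≤ 2 * ‖e - e'‖ :=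
    (norm_add_smul_sub_sub_le _ _ _ _ hhalf hG₁).trans (by linarith [norm_nonneg (e - e')])
  have hG₂ := hG (s := t + h / 2) (by linarith) (by linarith) he.error₂_lt he'.error₂_lt hE₂
  have hE₃ : ‖rk4Error₃ u G t h e - rk4Error₃ u G t h e'‖ ≤ 2 * ‖e - e'‖ :=
    (norm_add_smul_sub_sub_le _ _ _ _ hhalf hG₂).trans (by linarith)
  have hG₃ := hG (s := t + h / 2) (by linarith) (by linarith) he.error₃_lt he'.error₃_lt hE₃
  have hE₄ : ‖rk4Error₄ u G t h e - rk4Error₄ u G t h e'‖ ≤ 3 * ‖e - e'‖ :=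
    (norm_add_smul_sub_sub_le _ _ _ _ hh hG₃).trans (by linarith)
  have hG₄ := hG (s := t + h) (by linarith) hth he.error₄_lt he'.error₄_lt hE₄
  have htwo {g : E} {K : ℝ} (hg : ‖g‖ ≤ K) : ‖(2 : ℝ) • g‖ ≤ 2 * K := by
    rw [norm_smul, Real.norm_ofNat]
    linarith
  have hsum := norm_add_le_of_le (norm_add_le_of_le (norm_add_le_of_le hG₁ (htwo hG₂)) (htwo hG₃))
    hG₄
  have hsixth : 0 ≤ h / 6 := by linarith
  calc ‖rk4ErrorIncrement u G t h e - rk4ErrorIncrement u G t h e'‖ = h / 6 * ‖_‖ := by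
        rw [← Real.norm_of_nonneg hsixth, ← norm_smul, rk4ErrorIncrement, rk4ErrorIncrement]
        congr 1
        module
    _ ≤ _ := mul_le_mul_of_nonneg_left hsum hsixth
    _ = 2 * Λ * h * ‖e - e'‖ := by ring

theorem le_mul_exp_of_forall_lt {a : ℕ → ℝ} {N : ℕ} {b c ρ : ℝ} (hb : 0 ≤ b) (hc : 0 ≤ c)
    (h₀ : a 0 ≤ 0) (hstep : ∀ n, n + 1 < N → a n < ρ → a (n + 1) ≤ (1 + c) * a n + b)
    (hρ : ∀ n < N, n * b * Real.exp (n * c) < ρ) {n : ℕ} (hn : n < N) :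
    a n ≤ n * b * Real.exp (n * c) := by
  induction n with
  | zero => simpa using h₀
  | succ n ih =>
    have han := ih (by omega)
    have hexp : 1 ≤ Real.exp ((n + 1) * c) := Real.one_le_exp (by positivity)
    calc a (n + 1) ≤ (1 + c) * a n + b := hstep n hn (han.trans_lt (hρ n (by omega)))
      _ ≤ Real.exp c * (n * b * Real.exp (n * c)) + b * Real.exp ((n + 1) * c) := by
        have hc_exp : 1 + c ≤ Real.exp c := by linarith [Real.add_one_le_exp c]
        exact add_le_add ((mul_le_mul_of_nonneg_left han (by positivity)).trans (by gcongr))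
          (le_mul_of_one_le_right hb hexp)
      _ = (n + 1 : ℕ) * b * Real.exp ((n + 1 : ℕ) * c) := by
        push_cast
        rw [add_one_mul (n : ℝ) c, Real.exp_add]
        ring

end Stability

namespace GridFamily

variable {ι E : Type*} [NormedAddCommGroup E] [NormedSpace ℝ E] {𝒢 : GridFamily ι} {m q : ℕ}
  {T δ Λ : ℝ} {u : ℝ → E} {G : ℝ × E → E} {e : ι → ℕ → E}

/-- The `e i` are the errors at the nodes of the Runge–Kutta solutions on the grids of the family
that start from the exact initial value. -/
structure IsRK4Error (𝒢 : GridFamily ι) (u : ℝ → E) (G : ℝ × E → E) (e : ι → ℕ → E) : Prop where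
  zero : ∀ i, e i 0 = 0
  succ : ∀ i n, n + 1 < 𝒢.card i → e i (n + 1) = e i n + 𝒢.along (rk4ErrorIncrement u G) e i n

theorem IsRK4Error.comap {κ : Type*} (he : 𝒢.IsRK4Error u G e) (f : κ → ι) :
    (𝒢.comap f).IsRK4Error u G fun j => e (f j) :=
  ⟨fun j => he.zero (f j), fun j => he.succ (f j)⟩

theorem exists_norm_rk4ErrorIncrement_zero_le (H : IsErrorField T δ q u G)
    (h𝒢 : 𝒢.StepsWithin T)
    (hδ : ∀ i, ∀ n < 𝒢.card i, RK4ErrorsLT δ u G (n * 𝒢.step i) (𝒢.step i) 0) :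
    ∃ C, 0 ≤ C ∧ ∀ i, ∀ n < 𝒢.card i,
      ‖rk4ErrorIncrement u G (n * 𝒢.step i) (𝒢.step i) 0‖ ≤ C * 𝒢.step i ^ 5 := by
  obtain ⟨C, hC₀, hC⟩ := (isBigO_rk4ErrorIncrement H h𝒢 hδ q.zero_le
    (isBigO_const (c := fun _ => (0 : E)) ⟨0, by simp⟩)).exists_nonneg
  exact ⟨C, hC₀, fun i n hn => hC i 0 le_rfl n hn⟩

theorem IsRK4Error.exists_norm_le (H : IsErrorField T δ q u G) (h𝒢 : 𝒢.dropLast.StepsWithin T)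
    (hΛ : ∀ x ∈ errorTube E T δ, ∀ y ∈ errorTube E T δ, ‖G y - G x‖ ≤ Λ * ‖y - x‖) (hΛ₀ : 0 ≤ Λ)
    (hstepΛ : ∀ i, 𝒢.step i * Λ ≤ 1)
    (hδ : ∀ i, ∀ n < 𝒢.dropLast.card i, ∀ x, ‖x‖ < δ / 2 →
      RK4ErrorsLT δ u G (n * 𝒢.step i) (𝒢.step i) x)
    (he : 𝒢.IsRK4Error u G e) :
    ∃ C, ∀ i, C * 𝒢.step i ^ 4 < δ / 2 → ∀ n < 𝒢.card i, ‖e i n‖ ≤ C * 𝒢.step i ^ 4 := by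
  have hδ₀ (i n) (hn : n < 𝒢.dropLast.card i) := hδ i n hn 0 (by simpa using H.δ_pos)
  obtain ⟨C, hC₀, hC⟩ := exists_norm_rk4ErrorIncrement_zero_le H h𝒢 hδ₀
  refine ⟨T * C * Real.exp (2 * Λ * T), fun i hi n hn => ?_⟩
  have hk := 𝒢.step_pos i
  have hT := H.T_pos
  have hbound {n : ℕ} (hn : n < 𝒢.card i) : n * (C * 𝒢.step i ^ 5) *
      Real.exp (n * (2 * Λ * 𝒢.step i)) ≤ T * C * Real.exp (2 * Λ * T) * 𝒢.step i ^ 4 := by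
    have hnT : n * 𝒢.step i ≤ T := by
      rcases n with _ | n
      · simpa using hT.le
      · rw [Nat.cast_succ, add_one_mul]
        exact h𝒢 i n (Nat.lt_sub_of_add_lt hn)
    calc n * (C * 𝒢.step i ^ 5) * Real.exp (n * (2 * Λ * 𝒢.step i))
        = n * 𝒢.step i * C * Real.exp (2 * Λ * (n * 𝒢.step i)) * 𝒢.step i ^ 4 := by
          rw [mul_left_comm (n : ℝ) (2 * Λ)]; ring
      _ ≤ T * C * Real.exp (2 * Λ * T) * 𝒢.step i ^ 4 := by gcongr
  refine (le_mul_exp_of_forall_lt (a := fun n => ‖e i n‖) (N := 𝒢.card i) (ρ := δ / 2)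
    (by positivity) (by positivity) (by simp [he.zero]) (fun n hn hlt => ?_)
    (fun n hn => (hbound hn).trans_lt hi) hn).trans (hbound hn)
  have hn' : n < 𝒢.dropLast.card i := Nat.lt_sub_of_add_lt hn
  have hlip := norm_rk4ErrorIncrement_sub_le hΛ (by positivity) hk.le (h𝒢 i n hn') hΛ₀ (hstepΛ i)
    (hδ i n hn' _ hlt) (hδ₀ i n hn')
  rw [sub_zero] at hlip
  calc ‖e i (n + 1)‖ = ‖e i n + (rk4ErrorIncrement u G (n * 𝒢.step i) (𝒢.step i) (e i n) -
          rk4ErrorIncrement u G (n * 𝒢.step i) (𝒢.step i) 0) +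
          rk4ErrorIncrement u G (n * 𝒢.step i) (𝒢.step i) 0‖ := by
        rw [he.succ i n hn, add_assoc, sub_add_cancel]
    _ ≤ ‖e i n‖ + 2 * Λ * 𝒢.step i * ‖e i n‖ + C * 𝒢.step i ^ 5 :=
        norm_add_le_of_le (norm_add_le_of_le le_rfl hlip) (hC i n hn')
    _ = (1 + 2 * Λ * 𝒢.step i) * ‖e i n‖ + C * 𝒢.step i ^ 5 := by ring

theorem IsRK4Error.isBigO_of_rk4ErrorsLT (H : IsErrorField T δ q u G)
    (h𝒢 : 𝒢.dropLast.StepsWithin T)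
    (hδ : ∀ i, ∀ n < 𝒢.dropLast.card i, RK4ErrorsLT δ u G (n * 𝒢.step i) (𝒢.step i) (e i n))
    (he : 𝒢.IsRK4Error u G e) (he₀ : 𝒢.IsBigO 4 0 e) (hm : m ≤ q + 1) : 𝒢.IsBigO 4 m e := by
  induction m with
  | zero => exact he₀
  | succ m ih =>
    have hincr := isBigO_rk4ErrorIncrement H h𝒢 hδ (by omega) (ih (by omega)).dropLast
    refine isBigO_succ_iff.mpr ⟨he₀, hincr.congr fun i n hn => ?_⟩
    have hn' : n + 1 < 𝒢.card i := Nat.add_lt_of_lt_sub hn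
    rw [fwdDiff, he.succ i n hn', add_sub_cancel_left]
    rfl

theorem IsRK4Error.isBigO (H : IsErrorField T δ q u G) (h𝒢 : 𝒢.dropLast.StepsWithin T)
    (hstep : Tendsto 𝒢.step cofinite (𝓝 0)) (he : 𝒢.IsRK4Error u G e) :
    𝒢.IsBigO 4 (q + 1) e := by
  obtain ⟨Λ, hΛ₀, hΛ⟩ := H.hasBoundedDerivsOn.exists_norm_sub_le convex_errorTube
    (uniqueDiffOn_errorTube H.T_pos)
  have hsmall : ∀ᶠ h in 𝓝 (0 : ℝ), h * Λ ≤ 1 :=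
    (continuous_mul_const Λ).tendsto' 0 0 (zero_mul Λ) |>.eventually_le_const one_pos
  let S : Set ι := {i | 𝒢.step i * Λ ≤ 1 ∧ ∀ t x, 0 ≤ t → 0 ≤ 𝒢.step i → t + 𝒢.step i ≤ T →
    ‖x‖ < δ / 2 → RK4ErrorsLT δ u G t (𝒢.step i) x}
  have hS : ∀ᶠ i in cofinite, i ∈ S := hstep.eventually (hsmall.and H.eventually_rk4ErrorsLT)
  have hlt (i) (hi : i ∈ S) (n) (hn : n < 𝒢.dropLast.card i) (x) (hx : ‖x‖ < δ / 2) :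
      RK4ErrorsLT δ u G (n * 𝒢.step i) (𝒢.step i) x :=
    have hk := (𝒢.step_pos i).le
    hi.2 _ x (by positivity) hk (h𝒢 i n hn) hx
  obtain ⟨C, hC⟩ := IsRK4Error.exists_norm_le (𝒢 := 𝒢.comap ((↑) : S → ι)) H (fun i => h𝒢 i)
    hΛ hΛ₀.le (fun i => i.2.1) (fun i => hlt i i.2) (he.comap _)
  let S' : Set ι := {i | i ∈ S ∧ C * 𝒢.step i ^ 4 < δ / 2}
  have hS' : ∀ᶠ i in cofinite, i ∈ S' := by
    have hC_small : Tendsto (fun h : ℝ => C * h ^ 4) (𝓝 0) (𝓝 0) :=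
      (Continuous.tendsto' (by fun_prop) 0 0 (by simp))
    exact hS.and ((hC_small.comp hstep).eventually_lt_const (half_pos H.δ_pos))
  have hle (i : S') (n) (hn : n < 𝒢.card i) : ‖e i n‖ ≤ C * 𝒢.step i ^ 4 :=
    hC ⟨i, i.2.1⟩ i.2.2 n hn
  refine IsBigO.of_finite_compl hS' ((he.comap _).isBigO_of_rk4ErrorsLT H (fun i => h𝒢 i)
    (fun i n hn => hlt i i.2.1 n hn _ ((hle i n ?_).trans_lt i.2.2))
    (isBigO_zero_iff.mpr ⟨C, hle⟩) le_rfl)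
  exact hn.trans_le (Nat.sub_le _ 1)

end GridFamily

section Convergence

variable {E : Type*} [NormedAddCommGroup E] [NormedSpace ℝ E] {T : ℝ} {q : ℕ} {u : ℝ → E}
  {F : ℝ → E → E}

theorem exists_isErrorField (hT : 0 < T)
    (hF : ContDiffOn ℝ (q + 2 : ℕ) (Function.uncurry F) (Set.Icc 0 T ×ˢ Set.univ))
    (hu : ContDiffOn ℝ (q + 5 : ℕ) u (Set.Icc 0 T))
    (hode : ∀ t ∈ Set.Icc 0 T, HasDerivWithinAt u (F t (u t)) (Set.Icc 0 T) t) :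
    ∃ δ, IsErrorField T δ q u fun z => F z.1 (u z.1 + z.2) := by
  have hG : ContDiffOn ℝ (q + 2 : ℕ) (fun z : ℝ × E => F z.1 (u z.1 + z.2))
      (Set.Icc 0 T ×ˢ Set.univ) := by
    have hu_fst : ContDiffOn ℝ (q + 2 : ℕ) (fun z : ℝ × E => u z.1) (Set.Icc 0 T ×ˢ Set.univ) :=
      (hu.of_le (by exact_mod_cast by omega)).comp contDiffOn_fst fun z hz => hz.1
    exact hF.comp (contDiffOn_fst.prodMk (hu_fst.add contDiffOn_snd)) fun z hz => ⟨hz.1, trivial⟩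
  obtain ⟨U, hU, hKU, hbdd⟩ := exists_isOpen_hasBoundedDerivsOn hG
    ((uniqueDiffOn_Icc hT).prod uniqueDiffOn_univ)
    (isCompact_Icc.prod (isCompact_singleton (x := (0 : E))))
    (Set.prod_mono_right (Set.subset_univ _))
  obtain ⟨V, W, -, hW, hV, hzero, hVW⟩ :=
    generalized_tube_lemma isCompact_Icc isCompact_singleton hU hKU
  obtain ⟨δ, hδ, hball⟩ := Metric.isOpen_iff.mp hW 0 (hzero rfl)
  refine ⟨δ, hT, hδ, hu, by simpa using hode, ?_⟩
  have htube : Set.Icc 0 T ×ˢ Set.univ ∩ U ∩ Prod.snd ⁻¹' Metric.ball 0 δ = errorTube E T δ := by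
    ext ⟨t, x⟩
    exact ⟨fun h => ⟨h.1.1.1, h.2⟩, fun h => ⟨⟨⟨h.1, trivial⟩, hVW ⟨hV h.1, hball h.2⟩⟩, h.2⟩⟩
  exact htube ▸ hbdd.inter_isOpen (Metric.isOpen_ball.preimage continuous_snd)

/-- The grids with `i + 1` steps of equal length on `[0, T]`, for `i : ℕ`. -/
noncomputable def uniformGrids (hT : 0 < T) : GridFamily ℕ where
  step i := T / (i + 1 : ℕ)
  card i := i + 2
  step_pos i := by positivity
  bddAbove_step := ⟨T, by
    rintro _ ⟨i, rfl⟩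
    exact div_le_self hT.le (by simp)⟩

theorem tendsto_step_uniformGrids (hT : 0 < T) :
    Tendsto (uniformGrids hT).step cofinite (𝓝 0) := by
  rw [Nat.cofinite_eq_atTop]
  exact (tendsto_const_div_atTop_nhds_zero_nat T).comp (tendsto_add_atTop_nat 1)

theorem stepsWithin_dropLast_uniformGrids (hT : 0 < T) :
    (uniformGrids hT).dropLast.StepsWithin T := by
  intro i n hn
  have hn : (n + 1 : ℝ) ≤ (i + 1 : ℕ) := by exact_mod_cast hn
  calc n * (T / (i + 1 : ℕ)) + T / (i + 1 : ℕ) = (n + 1) * T / (i + 1 : ℕ) := by ring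
    _ ≤ T := by rw [div_le_iff₀ (by positivity), mul_comm T]; gcongr

/-- The Runge–Kutta solution with step `h` from the initial value `x` at time `0`. -/
noncomputable def rk4Solution (F : ℝ → E → E) (h : ℝ) (x : E) : ℕ → E
  | 0 => x
  | n + 1 => rk4Step F (n * h) h (rk4Solution F h x n)

theorem eq_rk4Solution {h : ℝ} {N : ℕ} {v : ℕ → E}
    (hv : ∀ n < N, v (n + 1) = rk4Step F (n * h) h (v n)) {n : ℕ} (hn : n ≤ N) :
    v n = rk4Solution F h (v 0) n := by
  induction n with
  | zero => rfl
  | succ n ih => rw [hv n hn, ih (by omega), rk4Solution]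

theorem GridFamily.isRK4Error_rk4Solution {ι : Type*} (𝒢 : GridFamily ι) :
    𝒢.IsRK4Error u (fun z => F z.1 (u z.1 + z.2))
      fun i n => rk4Solution F (𝒢.step i) (u 0) n - u (n * 𝒢.step i) where
  zero i := by simp [rk4Solution]
  succ i n _ := by
    rw [rk4Solution, rk4Step_eq_add_rk4ErrorIncrement (u := u)
      (G := fun z => F z.1 (u z.1 + z.2)) fun _ _ => rfl, Nat.cast_succ, add_one_mul]
    exact add_sub_cancel_left _ _

theorem isBigO_rk4Solution_sub (hT : 0 < T)
    (hF : ContDiffOn ℝ (q + 2 : ℕ) (Function.uncurry F) (Set.Icc 0 T ×ˢ Set.univ))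
    (hu : ContDiffOn ℝ (q + 5 : ℕ) u (Set.Icc 0 T))
    (hode : ∀ t ∈ Set.Icc 0 T, HasDerivWithinAt u (F t (u t)) (Set.Icc 0 T) t) :
    (uniformGrids hT).IsBigO 4 (q + 1) fun i n =>
      rk4Solution F ((uniformGrids hT).step i) (u 0) n - u (n * (uniformGrids hT).step i) := by
  obtain ⟨δ, H⟩ := exists_isErrorField hT hF hu hode
  exact (uniformGrids hT).isRK4Error_rk4Solution.isBigO H
    (stepsWithin_dropLast_uniformGrids hT) (tendsto_step_uniformGrids hT)

theorem rk4_deferred_correction_condition_general (hT : 0 < T)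
    (hF : ContDiffOn ℝ (q + 2 : ℕ) (Function.uncurry F) (Set.Icc 0 T ×ˢ Set.univ))
    (hu : ContDiffOn ℝ (q + 5 : ℕ) u (Set.Icc 0 T))
    (hode : ∀ t ∈ Set.Icc 0 T, HasDerivWithinAt u (F t (u t)) (Set.Icc 0 T) t)
    {m : ℕ} (hm : m ≤ q + 1) :
    ∃ C : ℝ, ∀ N : ℕ, 0 < N → ∀ v : ℕ → E, v 0 = u 0 →
      (∀ n < N, v (n + 1) = rk4Step F (n * (T / N)) (T / N) (v n)) → ∀ n, n + m ≤ N →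
        ‖((T / N) ^ m)⁻¹ • ∑ i ∈ Finset.range (m + 1), ((-1 : ℝ) ^ i * (m.choose i : ℝ)) •
          (v (n + m - i) - u ((n + m - i : ℕ) * (T / N)))‖ ≤ C * (T / N) ^ 4 := by
  obtain ⟨C, hC⟩ := isBigO_rk4Solution_sub hT hF hu hode
  refine ⟨C, fun N hN v hv₀ hv n hn => ?_⟩
  obtain ⟨i, rfl⟩ := Nat.exists_eq_add_one.mpr hN
  set k := T / (i + 1 : ℕ)
  have hk₀ : 0 < k := by positivity
  have hv_eq (j : ℕ) (hj : j ≤ n + m) :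
      v j - u (j * k) = rk4Solution F k (u 0) j - u (j * k) := by
    rw [eq_rk4Solution hv (hj.trans hn), hv₀]
  rw [sum_choose_smul_eq_fwdDiff_iter fun j => v j - u (j * k), fwdDiff_iter_congr hv_eq,
    norm_smul, norm_inv, norm_pow, Real.norm_of_nonneg hk₀.le,
    inv_mul_le_iff₀ (by positivity)]
  calc _ ≤ C * k ^ (4 + m) := hC i m hm n (Nat.lt_succ_of_le hn)
    _ = k ^ m * (C * k ^ 4) := by ring

end Convergence

/-- **Theorem 3.2: deferred correction condition for RK4.**
Let `p ≥ 6`, `F ∈ C^p([0,T] × X, X)`, and suppose the IVP `u' = F(t,u)`, `u(0) = u₀`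
has a (unique) solution `u ∈ C^{p+1}([0,T], X)`. For `N > 0`, `k = T/N`, `t_n = nk`, let
`{u^{4,n}}` be the RK4 sequence started at `u₀`. Then for every `0 ≤ m ≤ p - 4` there is
a constant `C`, independent of `k`, such that
`‖D₊^m (u^{4,n} - u(t_n))‖ ≤ C k^4` for all `n = 0, …, N - m`. -/
theorem rk4_deferred_correction_condition
    (T : ℝ) (hT : 0 < T) (p : ℕ) (hp : 6 ≤ p) (F : ℝ → X → X)
    (hF : ContDiffOn ℝ p (Function.uncurry F) (Set.Icc 0 T ×ˢ (Set.univ : Set X)))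
    (u : ℝ → X) (u0 : X)
    (hu : ContDiffOn ℝ (p + 1) u (Set.Icc 0 T))
    (hu0 : u 0 = u0)
    (hode : ∀ t ∈ Set.Icc 0 T, HasDerivAt u (F t (u t)) t) :
    ∀ m : ℕ, m ≤ p - 4 →
      ∃ C : ℝ, ∀ N : ℕ, 0 < N →
        ∀ v : ℕ → X, v 0 = u0 →
          (∀ n : ℕ, n < N → v (n + 1) = rk4Step F ((n : ℝ) * (T / N)) (T / N) (v n)) →
          ∀ n : ℕ, n + m ≤ N →
            ‖((T / N) ^ m)⁻¹ • ∑ i ∈ Finset.range (m + 1),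
                ((-1 : ℝ) ^ i * (m.choose i : ℝ)) •
                  (v (n + m - i) - u (((n + m - i : ℕ) : ℝ) * (T / N)))‖
              ≤ C * (T / N) ^ 4 := by
  subst hu0
  exact fun m hm => rk4_deferred_correction_condition_general (q := p - 4) hT
    (hF.of_le (by exact_mod_cast by omega)) (hu.of_le (by exact_mod_cast by omega))
    (fun t ht => (hode t ht).hasDerivWithinAt) (by omega)
end

section
/- Let X be a Banach space, T > 0, F ∈ C^6([0,T] × X, X) satisfying ‖F(t,x) − F(t,y)‖ ≤ μ‖x − y‖ for some μ ≥ 0 and all (t,x,y) ∈ [0,T] × X × X, and suppose u ∈ C^7([0,T], X) solves u'(t) = F(t, u(t)) on [0,T]. For k > 0 and t with t + k ≤ T define A(t,k) = (125/384)(−3u(t) − u(t + k/5) + 18u(t + 2k/5) − 18u(t + 3k/5) + u(t + 4k/5) + 3u(t + k)) and B(t,k) = (25/768)(145u(t) − 387u(t + k/5) + 402u(t + 2k/5) − 238u(t + 3k/5) + 93u(t + 4k/5) − 15u(t + k)). Then there exists a constant C, independent of k and t, such that ‖u(t+k) − u(t) − A(t,k) − k·F(t + k/2, u(t) + (k/2)F(t,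 u(t)) + B(t,k))‖ ≤ C k^7 for all k ∈ (0, T] and t ∈ [0, T − k]. -/
open Finset

/-!
Comparing the stage value `u(t) + (k/2) u'(t) + B` with `u(t+k/2)`, the Lipschitz bound reduces the
claim to `u(t+k) − u(t) − A − k u'(t+k/2) = O(k⁷)` and `u(t) + (k/2) u'(t) + B − u(t+k/2) = O(k⁶)`;
the missing power in the second comes from the factor `k` in front of `F`. Both left-hand sides are
linear functionals of `u` built from scaled values and derivatives at nodes of `[t, t+k]`. If such
a functional kills the polynomials of degree `< n`, it kills the Taylor polynomial of `u` at `t`, so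
only `O(kⁿ)` remainders survive. The coefficients of `A` and `B` are chosen to satisfy these moment
conditions with `n = 7` and `n = 6`.
-/

open scoped Nat

section IteratedDerivWithin

variable {𝕜 E : Type*} [NontriviallyNormedField 𝕜] [NormedAddCommGroup E] [NormedSpace 𝕜 E]
  {f : 𝕜 → E} {s t : Set 𝕜} {x : 𝕜}

theorem iteratedDerivWithin_iteratedDerivWithin (m p : ℕ) (f : 𝕜 → E) (s : Set 𝕜) :
    iteratedDerivWithin m (iteratedDerivWithin p f s) s = iteratedDerivWithin (m + p) f s := by
  funext x
  have hp : iteratedDerivWithin p f s = (fun g => derivWithin g s)^[p] f :=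
    funext fun _ => iteratedDerivWithin_eq_iterate
  rw [iteratedDerivWithin_eq_iterate, iteratedDerivWithin_eq_iterate, hp,
    Function.iterate_add_apply]

theorem contDiffOn_iteratedDerivWithin {m p : ℕ} (hs : UniqueDiffOn 𝕜 s)
    (hf : ContDiffOn 𝕜 (m + p : ℕ) f s) : ContDiffOn 𝕜 m (iteratedDerivWithin p f s) s := by
  induction p generalizing f with
  | zero => simpa using hf
  | succ p ih =>
    rw [iteratedDerivWithin_succ']
    exact ih (hf.derivWithin hs (by norm_cast))

theorem iteratedDerivWithin_of_subset {n : ℕ} (hst : s ⊆ t) (hs : UniqueDiffOn 𝕜 s)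
    (ht : UniqueDiffOn 𝕜 t) (hf : ContDiffOn 𝕜 n f t) (hx : x ∈ s) :
    iteratedDerivWithin n f s x = iteratedDerivWithin n f t x := by
  simp only [iteratedDerivWithin, iteratedFDerivWithin_subset hst hs ht hf hx]

end IteratedDerivWithin

section Taylor

theorem descFactorial_add_div_factorial {𝕜 : Type*} [DivisionRing 𝕜] [CharZero 𝕜] (p m : ℕ) :
    ((p + m).descFactorial p : 𝕜) / (p + m)! = (m ! : 𝕜)⁻¹ := by
  have hfact := Nat.factorial_mul_descFactorial (Nat.le_add_right p m)
  rw [Nat.add_sub_cancel_left] at hfact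
  have hdesc : ((p + m).descFactorial p : 𝕜) ≠ 0 :=
    mod_cast (Nat.descFactorial_pos.2 (Nat.le_add_right p m)).ne'
  rw [← hfact, Nat.cast_mul, div_mul_cancel_right₀ hdesc]

variable {E : Type*} [NormedAddCommGroup E] [NormedSpace ℝ E] {f : ℝ → E} {a b t x M : ℝ} {n p : ℕ}

theorem norm_sub_taylor_sum_le (hab : a < b) (hf : ContDiffOn ℝ n f (Set.Icc a b))
    (hM : ∀ y ∈ Set.Icc a b, ‖iteratedDerivWithin n f (Set.Icc a b) y‖ ≤ M)
    (ht : t ∈ Set.Icc a b) (hx : x ∈ Set.Icc t b) :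
    ‖f x - ∑ m ∈ range n, ((m ! : ℝ)⁻¹ * (x - t) ^ m) • iteratedDerivWithin m f (Set.Icc a b) t‖ ≤
      M * (x - t) ^ n := by
  have hM₀ : 0 ≤ M := (norm_nonneg _).trans (hM t ht)
  have hxt : 0 ≤ x - t := sub_nonneg.2 hx.1
  rcases n with _ | n
  · simpa using hM x ⟨ht.1.trans hx.1, hx.2⟩
  rcases ht.2.eq_or_lt with rfl | htb
  · obtain rfl : x = t := le_antisymm hx.2 hx.1
    simp [sum_range_succ']
  have hsub : Set.Icc t b ⊆ Set.Icc a b := Set.Icc_subset_Icc_left ht.1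
  have hderiv : ∀ m ≤ n + 1, ∀ y ∈ Set.Icc t b,
      iteratedDerivWithin m f (Set.Icc t b) y = iteratedDerivWithin m f (Set.Icc a b) y :=
    fun m hm y hy => iteratedDerivWithin_of_subset hsub (uniqueDiffOn_Icc htb)
      (uniqueDiffOn_Icc hab) (hf.of_le (mod_cast hm)) hy
  have htaylor := taylor_mean_remainder_bound htb.le (mod_cast hf.mono hsub) hx
    fun y hy => (hderiv (n + 1) le_rfl y hy).symm ▸ hM y (hsub hy)
  rw [taylor_within_apply, sum_congr rfl fun m hm => by
    rw [hderiv m (mem_range.1 hm).le t (Set.left_mem_Icc.2 htb.le)]] at htaylor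
  exact htaylor.trans (div_le_self (by positivity) (mod_cast n.factorial_pos))

theorem norm_iteratedDerivWithin_sub_taylor_sum_le (hab : a < b)
    (hf : ContDiffOn ℝ n f (Set.Icc a b)) (hp : p ≤ n)
    (hM : ∀ y ∈ Set.Icc a b, ‖iteratedDerivWithin n f (Set.Icc a b) y‖ ≤ M)
    (ht : t ∈ Set.Icc a b) (hx : x ∈ Set.Icc t b) :
    ‖iteratedDerivWithin p f (Set.Icc a b) x - ∑ m ∈ range n,
        ((m.descFactorial p : ℝ) / m ! * (x - t) ^ (m - p)) •
          iteratedDerivWithin m f (Set.Icc a b) t‖ ≤ M * (x - t) ^ (n - p) := by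
  obtain ⟨q, rfl⟩ := Nat.exists_eq_add_of_le' hp
  have htaylor := norm_sub_taylor_sum_le hab
    (contDiffOn_iteratedDerivWithin (uniqueDiffOn_Icc hab) hf)
    (by rwa [iteratedDerivWithin_iteratedDerivWithin]) ht hx
  simp only [iteratedDerivWithin_iteratedDerivWithin] at htaylor
  have hlow : ∀ m ∈ range p, ((m.descFactorial p : ℝ) / m ! * (x - t) ^ (m - p)) •
      iteratedDerivWithin m f (Set.Icc a b) t = 0 := fun m hm => by
    simp [Nat.descFactorial_of_lt (mem_range.1 hm)]
  rw [add_comm q p, sum_range_add, sum_eq_zero hlow, zero_add]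
  simpa only [descFactorial_add_div_factorial, Nat.add_sub_cancel_left, add_comm _ p] using htaylor

end Taylor

/-- The data of a Hermite–Birkhoff difference functional
`f ↦ ∑ i, weight i * k ^ order i * f^(order i) (t + node i * k)`, where `t` is the base point and
`k` the step length. -/
structure HermiteBirkhoffStencil (ι : Type*) where
  weight : ι → ℝ
  order : ι → ℕ
  node : ι → ℝ

namespace HermiteBirkhoffStencil

variable {ι E : Type*} [Fintype ι] [NormedAddCommGroup E] [NormedSpace ℝ E]
  {S : HermiteBirkhoffStencil ι} {n : ℕ}

/-- The value of the functional at base point `t` and step `k` on a function whose `p`-th derivative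
is `D p`. Passing the whole sequence `D` leaves open which notion of derivative is meant. -/
def apply (S : HermiteBirkhoffStencil ι) (D : ℕ → ℝ → E) (t k : ℝ) : E :=
  ∑ i, (S.weight i * k ^ S.order i) • D (S.order i) (t + S.node i * k)

/-- The value of the functional with `t = 0` and `k = 1` on the monomial `x ^ m`. The truncated
subtraction is harmless, because the falling factorial vanishes when `m < order i`. -/
def moment (S : HermiteBirkhoffStencil ι) (m : ℕ) : ℝ :=
  ∑ i, S.weight i * (m.descFactorial (S.order i) * S.node i ^ (m - S.order i))

/-- The order conditions: the functional annihilates polynomials of degree `< n`, uses derivatives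
of order at most `n` only, and samples them inside the step `[t, t + k]`. -/
structure HasOrder (S : HermiteBirkhoffStencil ι) (n : ℕ) : Prop where
  order_le : ∀ i, S.order i ≤ n
  node_mem : ∀ i, S.node i ∈ Set.Icc (0 : ℝ) 1
  moment_eq_zero : ∀ m < n, S.moment m = 0

theorem sum_taylor_term_eq_moment_smul (S : HermiteBirkhoffStencil ι) (m : ℕ) (k : ℝ) (v : E) :
    ∑ i, (S.weight i * k ^ S.order i) •
        ((m.descFactorial (S.order i) : ℝ) / m ! * (S.node i * k) ^ (m - S.order i)) • v =
      (k ^ m / m ! * S.moment m) • v := by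
  rw [moment, mul_sum, sum_smul]
  refine sum_congr rfl fun i _ => ?_
  rw [smul_smul]
  congr 1
  rcases lt_or_ge m (S.order i) with hm | hm
  · simp [Nat.descFactorial_of_lt hm]
  · rw [mul_pow, ← pow_mul_pow_sub k hm]
    ring

theorem HasOrder.sum_taylor_eq_zero (hS : S.HasOrder n) (k : ℝ) (v : ℕ → E) :
    ∑ i, (S.weight i * k ^ S.order i) • ∑ m ∈ range n,
      ((m.descFactorial (S.order i) : ℝ) / m ! * (S.node i * k) ^ (m - S.order i)) • v m = 0 := by
  simp only [smul_sum]
  rw [sum_comm]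
  refine sum_eq_zero fun m hm => ?_
  rw [sum_taylor_term_eq_moment_smul, hS.moment_eq_zero m (mem_range.1 hm), mul_zero, zero_smul]

variable {f : ℝ → E} {a b t k M : ℝ}

theorem HasOrder.norm_apply_iteratedDerivWithin_le (hS : S.HasOrder n) (hab : a < b)
    (hf : ContDiffOn ℝ n f (Set.Icc a b))
    (hM : ∀ y ∈ Set.Icc a b, ‖iteratedDerivWithin n f (Set.Icc a b) y‖ ≤ M)
    (hk : 0 ≤ k) (ht : t ∈ Set.Icc a (b - k)) :
    ‖S.apply (fun p => iteratedDerivWithin p f (Set.Icc a b)) t k‖ ≤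
      (∑ i, |S.weight i|) * M * k ^ n := by
  have htab : t ∈ Set.Icc a b := ⟨ht.1, by linarith [ht.2]⟩
  have hM₀ : 0 ≤ M := (norm_nonneg _).trans (hM t htab)
  rw [← sub_zero (apply ..),
    ← hS.sum_taylor_eq_zero k fun m => iteratedDerivWithin m f (Set.Icc a b) t,
    apply, ← sum_sub_distrib, sum_mul, sum_mul]
  refine norm_sum_le_of_le _ fun i _ => ?_
  obtain ⟨hnode₀, hnode₁⟩ := hS.node_mem i
  have hstep : S.node i * k ≤ k := mul_le_of_le_one_left hk hnode₁
  have hstep₀ : 0 ≤ S.node i * k := mul_nonneg hnode₀ hk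
  have htaylor := norm_iteratedDerivWithin_sub_taylor_sum_le hab hf (hS.order_le i) hM htab
    (x := t + S.node i * k) ⟨by linarith, by linarith [ht.2]⟩
  rw [add_sub_cancel_left] at htaylor
  rw [← smul_sub, norm_smul, norm_mul, Real.norm_eq_abs, Real.norm_of_nonneg (pow_nonneg hk _)]
  calc _ ≤ |S.weight i| * k ^ S.order i * (M * k ^ (n - S.order i)) := by
        gcongr
        exact htaylor.trans (by gcongr)
    _ = |S.weight i| * M * k ^ n := by
        rw [← pow_mul_pow_sub k (hS.order_le i)]
        ring

theorem HasOrder.exists_norm_apply_iteratedDerivWithin_le (hS : S.HasOrder n) (hab : a < b)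
    (hf : ContDiffOn ℝ n f (Set.Icc a b)) :
    ∃ C, ∀ k, 0 ≤ k → ∀ t ∈ Set.Icc a (b - k),
      ‖S.apply (fun p => iteratedDerivWithin p f (Set.Icc a b)) t k‖ ≤ C * k ^ n := by
  obtain ⟨M, hM⟩ := isCompact_Icc.exists_bound_of_continuousOn
    (hf.continuousOn_iteratedDerivWithin le_rfl (uniqueDiffOn_Icc hab))
  exact ⟨_, fun k hk t ht => hS.norm_apply_iteratedDerivWithin_le hab hf hM hk ht⟩

end HermiteBirkhoffStencil

namespace DC6RK24

variable {X : Type*} [NormedAddCommGroup X] [NormedSpace ℝ X]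

/-- The correction `A(t, k)` of the step, the exact-solution version of `a_n`. -/
noncomputable def stepCorrection (u : ℝ → X) (t k : ℝ) : X :=
  (125 / 384 : ℝ) • ((-3 : ℝ) • u t - u (t + k / 5) + (18 : ℝ) • u (t + 2 * k / 5)
    - (18 : ℝ) • u (t + 3 * k / 5) + u (t + 4 * k / 5) + (3 : ℝ) • u (t + k))

/-- The correction `B(t, k)` of the midpoint stage, the exact-solution version of `b_n`. -/
noncomputable def stageCorrection (u : ℝ → X) (t k : ℝ) : X :=
  (25 / 768 : ℝ) • ((145 : ℝ) • u t - (387 : ℝ) • u (t + k / 5)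
    + (402 : ℝ) • u (t + 2 * k / 5) - (238 : ℝ) • u (t + 3 * k / 5)
    + (93 : ℝ) • u (t + 4 * k / 5) - (15 : ℝ) • u (t + k))

/-- The stencil of `u(t+k) - u(t) - A(t,k) - k u'(t+k/2)`. The last entry is the derivative. -/
noncomputable def stepDefect : HermiteBirkhoffStencil (Fin 7) where
  weight := ![-1 + 125 / 384 * 3, 125 / 384, -(125 / 384 * 18), 125 / 384 * 18, -(125 / 384),
    1 - 125 / 384 * 3, -1]
  order := ![0, 0, 0, 0, 0, 0, 1]
  node := ![0, 1 / 5, 2 / 5, 3 / 5, 4 / 5, 1, 1 / 2]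

/-- The stencil of `u(t) + (k/2) u'(t) + B(t,k) - u(t+k/2)`. The last entry is the derivative. -/
noncomputable def stageDefect : HermiteBirkhoffStencil (Fin 8) where
  weight := ![1 + 25 / 768 * 145, -(25 / 768 * 387), 25 / 768 * 402, -(25 / 768 * 238),
    25 / 768 * 93, -(25 / 768 * 15), -1, 1 / 2]
  order := ![0, 0, 0, 0, 0, 0, 0, 1]
  node := ![0, 1 / 5, 2 / 5, 3 / 5, 4 / 5, 1, 1 / 2, 0]

theorem stepDefect_hasOrder : stepDefect.HasOrder 7 where
  order_le i := by fin_cases i <;> simp [stepDefect]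
  node_mem i := by fin_cases i <;> norm_num [stepDefect]
  moment_eq_zero m hm := by
    interval_cases m <;>
      norm_num [stepDefect, HermiteBirkhoffStencil.moment, Fin.sum_univ_succ]

theorem stageDefect_hasOrder : stageDefect.HasOrder 6 where
  order_le i := by fin_cases i <;> simp [stageDefect]
  node_mem i := by fin_cases i <;> norm_num [stageDefect]
  moment_eq_zero m hm := by
    interval_cases m <;>
      norm_num [stageDefect, HermiteBirkhoffStencil.moment, Fin.sum_univ_succ]

theorem stepDefect_apply (D : ℕ → ℝ → X) (t k : ℝ) :
    stepDefect.apply D t k =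
      D 0 (t + k) - D 0 t - stepCorrection (D 0) t k - k • D 1 (t + k / 2) := by
  simp only [stepDefect, HermiteBirkhoffStencil.apply, Fin.sum_univ_seven, Matrix.cons_val,
    stepCorrection]
  ring_nf
  module

theorem stageDefect_apply (D : ℕ → ℝ → X) (t k : ℝ) :
    stageDefect.apply D t k =
      D 0 t + (k / 2) • D 1 t + stageCorrection (D 0) t k - D 0 (t + k / 2) := by
  simp only [stageDefect, HermiteBirkhoffStencil.apply, Fin.sum_univ_eight, Matrix.cons_val,
    stageCorrection]
  ring_nf
  module

end DC6RK24

open DC6RK24 in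
theorem dc6rk24_local_truncation_error_general
    {X : Type*} [NormedAddCommGroup X] [NormedSpace ℝ X]
    (T : ℝ) (hT : 0 < T) (F : ℝ → X → X) (μ : ℝ) (hμ : 0 ≤ μ)
    (hLip : ∀ t ∈ Set.Icc 0 T, ∀ x y : X, ‖F t x - F t y‖ ≤ μ * ‖x - y‖)
    (u : ℝ → X)
    (hu : ContDiffOn ℝ 7 u (Set.Icc 0 T))
    (hode : ∀ t ∈ Set.Icc 0 T, HasDerivWithinAt u (F t (u t)) (Set.Icc 0 T) t) :
    ∃ C : ℝ, ∀ k : ℝ, 0 ≤ k → ∀ t ∈ Set.Icc 0 (T - k),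
      ‖u (t + k) - u t - stepCorrection u t k
          - k • F (t + k / 2) (u t + (k / 2) • F t (u t) + stageCorrection u t k)‖ ≤ C * k ^ 7 := by
  have hderiv : ∀ s ∈ Set.Icc 0 T, iteratedDerivWithin 1 u (Set.Icc 0 T) s = F s (u s) := by
    intro s hs
    rw [iteratedDerivWithin_one, (hode s hs).derivWithin (uniqueDiffOn_Icc hT s hs)]
  obtain ⟨C₁, hC₁⟩ := stepDefect_hasOrder.exists_norm_apply_iteratedDerivWithin_le hT hu
  obtain ⟨C₂, hC₂⟩ := stageDefect_hasOrder.exists_norm_apply_iteratedDerivWithin_le hT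
    (hu.of_le (by norm_num))
  refine ⟨C₁ + μ * C₂, fun k hk t ht => ?_⟩
  have htT : t ∈ Set.Icc 0 T := ⟨ht.1, by linarith [ht.2]⟩
  have hmid : t + k / 2 ∈ Set.Icc 0 T := ⟨by linarith [ht.1], by linarith [ht.2]⟩
  have hstep := hC₁ k hk t ht
  have hstage := hC₂ k hk t ht
  rw [stepDefect_apply, iteratedDerivWithin_zero, hderiv _ hmid] at hstep
  rw [stageDefect_apply, iteratedDerivWithin_zero, hderiv t htT] at hstage
  set stage := u t + (k / 2) • F t (u t) + stageCorrection u t k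
  calc
    _ = ‖(u (t + k) - u t - stepCorrection u t k - k • F (t + k / 2) (u (t + k / 2)))
          - k • (F (t + k / 2) stage - F (t + k / 2) (u (t + k / 2)))‖ := by
        congr 1
        module
    _ ≤ C₁ * k ^ 7 + k * (μ * (C₂ * k ^ 6)) := by
        refine norm_sub_le_of_le hstep ?_
        rw [norm_smul, Real.norm_of_nonneg hk]
        gcongr
        exact (hLip _ hmid _ _).trans (by gcongr)
    _ = (C₁ + μ * C₂) * k ^ 7 := by ring

/-- **local truncation error of the corrected explicit midpoint step.**
Let `F ∈ C^6([0,T] × X, X)` be Lipschitz in its second variable with constant `μ ≥ 0`,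
and let `u ∈ C^7([0,T], X)` solve `u' = F(t, u)` on `[0,T]`. With
`A(t,k) = (125/384)(−3u(t) − u(t+k/5) + 18u(t+2k/5) − 18u(t+3k/5) + u(t+4k/5) + 3u(t+k))`
and
`B(t,k) = (25/768)(145u(t) − 387u(t+k/5) + 402u(t+2k/5) − 238u(t+3k/5) + 93u(t+4k/5) − 15u(t+k))`,
there is a constant `C`, independent of `k` and `t`, such that
`‖u(t+k) − u(t) − A(t,k) − k F(t+k/2, u(t) + (k/2)F(t,u(t)) + B(t,k))‖ ≤ C k⁷`
for all `k ∈ (0,T]` and `t ∈ [0, T−k]`. -/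
theorem dc6rk24_local_truncation_error
    {X : Type*} [NormedAddCommGroup X] [NormedSpace ℝ X] [CompleteSpace X]
    (T : ℝ) (hT : 0 < T) (F : ℝ → X → X) (μ : ℝ) (hμ : 0 ≤ μ)
    (hF : ContDiffOn ℝ 6 (Function.uncurry F) (Set.Icc 0 T ×ˢ (Set.univ : Set X)))
    (hLip : ∀ t ∈ Set.Icc 0 T, ∀ x y : X, ‖F t x - F t y‖ ≤ μ * ‖x - y‖)
    (u : ℝ → X)
    (hu : ContDiffOn ℝ 7 u (Set.Icc 0 T))
    (hode : ∀ t ∈ Set.Icc 0 T, HasDerivAt u (F t (u t)) t) :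
    ∃ C : ℝ, ∀ k : ℝ, 0 < k → k ≤ T → ∀ t ∈ Set.Icc 0 (T - k),
      ‖u (t + k) - u t
          - (125 / 384 : ℝ) • ((-3 : ℝ) • u t - u (t + k / 5) + (18 : ℝ) • u (t + 2 * k / 5)
              - (18 : ℝ) • u (t + 3 * k / 5) + u (t + 4 * k / 5) + (3 : ℝ) • u (t + k))
          - k • F (t + k / 2)
              (u t + (k / 2) • F t (u t)
                + (25 / 768 : ℝ) • ((145 : ℝ) • u t - (387 : ℝ) • u (t + k / 5)
                    + (402 : ℝ) • u (t + 2 * k / 5) - (238 : ℝ) • u (t + 3 * k / 5)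
                    + (93 : ℝ) • u (t + 4 * k / 5) - (15 : ℝ) • u (t + k)))‖
        ≤ C * k ^ 7 := by
  obtain ⟨C, hC⟩ := dc6rk24_local_truncation_error_general T hT F μ hμ hLip u hu
    fun t ht => (hode t ht).hasDerivWithinAt
  exact ⟨C, fun k hk _ => hC k hk.le⟩
end
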